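/- There exists a computable closed set K ⊆ ℝ² which is a dendroid and which does not *-include a Π⁰₁ dendrite: there is a real ε > 0 such that every Π⁰₁ closed set R ⊆ K which is a dendrite satisfies d_H(R, K) ≥ ε. -/

import Mathlib

open Set Metric

section TopDefs

variable {α : Type*} [TopologicalSpace α]

/-- `A ⊆ α` is an arc with endpoints `x` and `y`:
a homeomorphic (continuous injective) image of `[0,1]` sending `0 ↦ x`, `1 ↦ y`. -/
def IsArc (A : Set α) (x y : α) : Prop :=
  ∃ f : Set.Icc (0:ℝ) 1 → α, Continuous f ∧ Function.Injective f ∧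
    Set.range f = A ∧ f ⟨0, by norm_num⟩ = x ∧ f ⟨1, by norm_num⟩ = y

/-- A continuum: a nonempty compact connected set. -/
def IsContinuum (X : Set α) : Prop := IsCompact X ∧ IsConnected X

/-- Any two distinct points of `X` are endpoints of an arc contained in `X`. -/
def ArcwiseConnectedSet (X : Set α) : Prop :=
  ∀ x ∈ X, ∀ y ∈ X, x ≠ y → ∃ A, A ⊆ X ∧ IsArc A x y

/-- `X` is unicoherent: for all closed connected `A, B ⊆ X` with `A ∪ B = X`,
the intersection `A ∩ B` is connected. -/
def UnicoherentSet (X : Set α) : Prop :=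
  ∀ A B : Set α, A ⊆ X → B ⊆ X → IsClosed A → IsClosed B →
    IsConnected A → IsConnected B → A ∪ B = X → IsConnected (A ∩ B)

/-- Every subcontinuum of `X` is unicoherent. -/
def HereditarilyUnicoherent (X : Set α) : Prop :=
  ∀ Y, Y ⊆ X → IsContinuum Y → UnicoherentSet Y

/-- A dendroid: an arcwise connected, hereditarily unicoherent continuum. -/
def IsDendroid (X : Set α) : Prop :=
  IsContinuum X ∧ ArcwiseConnectedSet X ∧ HereditarilyUnicoherent X

/-- The unit circle `S¹`. -/
def unitCircle : Set (EuclideanSpace ℝ (Fin 2)) := Metric.sphere 0 1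

/-- A dendrite: a locally connected continuum containing no subset homeomorphic to `S¹`. -/
def IsDendrite (X : Set α) : Prop :=
  IsContinuum X ∧ LocallyConnectedSpace ↥X ∧
    ∀ S : Set α, S ⊆ X → IsEmpty (↥S ≃ₜ ↥unitCircle)

/-- `x` and `y` lie in the same arc-component of `Y`. -/
def SameArcComponent (Y : Set α) (x y : α) : Prop :=
  x = y ∨ ∃ A, A ⊆ Y ∧ IsArc A x y

/-- `x` is a ramification point of `X`: `X \ {x}` has at least three arc-components. -/
def IsRamificationPoint (X : Set α) (x : α) : Prop :=
  x ∈ X ∧ ∃ u v w, u ∈ X \ {x} ∧ v ∈ X \ {x} ∧ w ∈ X \ {x} ∧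
    ¬ SameArcComponent (X \ {x}) u v ∧ ¬ SameArcComponent (X \ {x}) u w ∧
    ¬ SameArcComponent (X \ {x}) v w

/-- A tree (as a continuum): a dendrite with finitely many ramification points. -/
def IsTreeContinuum (X : Set α) : Prop :=
  IsDendrite X ∧ {x | IsRamificationPoint X x}.Finite

end TopDefs

section CompDefs

/-- The rational open ball in `ℝ²` coded by `((q₁, q₂), r)`. -/
def ballOfCode (c : (ℚ × ℚ) × ℚ) : Set (ℝ × ℝ) :=
  {x | dist x (((c.1.1 : ℝ), (c.1.2 : ℝ)) : ℝ × ℝ) < (c.2 : ℝ)}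

/-- A closed set `F ⊆ ℝ²` is `Π⁰₁` if it is the complement of the union of the rational
open balls coded by some c.e. set of codes. -/
def IsPi01Closed (F : Set (ℝ × ℝ)) : Prop :=
  ∃ W : (ℚ × ℚ) × ℚ → Prop, REPred W ∧ F = Set.univ \ ⋃ c ∈ {c | W c}, ballOfCode c

/-- `F ⊆ ℝ²` is c.e. closed if the set of codes of rational open balls meeting `F` is c.e. -/
def IsCEClosed (F : Set (ℝ × ℝ)) : Prop :=
  REPred (fun c : (ℚ × ℚ) × ℚ => (F ∩ ballOfCode c).Nonempty)

/-- A computable closed subset of `ℝ²`: both `Π⁰₁` and c.e. closed. -/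
def IsComputableClosed (F : Set (ℝ × ℝ)) : Prop :=
  IsPi01Closed F ∧ IsCEClosed F

/-- A point of `ℝ²` is computable if the set of codes of rational open balls
containing it is c.e. -/
def IsComputablePoint (x : ℝ × ℝ) : Prop :=
  REPred (fun c : (ℚ × ℚ) × ℚ => x ∈ ballOfCode c)

end CompDefs

section PsiDefs

/-- A tree of binary strings: a set of finite binary strings closed under prefixes. -/
def IsTreeOfStrings (T : Set (List Bool)) : Prop :=
  ∀ σ ∈ T, ∀ τ : List Bool, τ <+: σ → τ ∈ T

/-- The point `ψ(σ) ∈ ℝ²` associated with the binary string `σ`. -/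
noncomputable def psiPt (σ : List Bool) : ℝ × ℝ :=
  ((3:ℝ) ^ (-(σ.length : ℤ)) / 2 +
      2 * ∑ i ∈ Finset.range σ.length,
        (if σ.getD i false then (3:ℝ) ^ (-((i : ℤ) + 1)) else 0),
    (2:ℝ) ^ (-(σ.length : ℤ)))

/-- The planar embedding `Ψ(T)` of a tree `T` of binary strings: the closure of the union
of the segments from `ψ(σ⁻)` to `ψ(σ)` over nonempty `σ ∈ T` (together with the points
`ψ(σ)`, `σ ∈ T`, which makes no difference except for the degenerate trees `∅`, `{⟨⟩}`). -/
noncomputable def PsiSet (T : Set (List Bool)) : Set (ℝ × ℝ) :=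
  closure (psiPt '' T ∪ ⋃ σ ∈ T, ⋃ (_ : σ ≠ []), segment ℝ (psiPt σ.dropLast) (psiPt σ))

end PsiDefs

/-!
The dendroid `K` is a comb over `[-2, 2]` with spine `{0} × [0, 1]` and teeth at `xₙ = 2⁻ⁿ`. The
tooth with number `n = ⟨e, m⟩` has height `2⁻ᵉ`, so that for every `e` the tips of infinitely many
teeth converge to the point `(0, 2⁻ᵉ)` of the spine. The teeth with first index `e` are used against
the `e`-th `Π⁰₁` set `Rₑ`. As soon as `Rₑ` is found to omit the tip of some such tooth, the first
one found is replaced by a tent: the base line rises to the tip and comes down again. The later the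
discovery is made, the thinner the tent, so `K` remains computable. There is at most one tent of
each height, so the base line remains the graph of a continuous function.

A connected closed `R ⊆ K` with `d_H(R, K) < 1` contains the base line over `[-1, 1]`, because its
projection is an interval and almost all fibers of `K` are single points. If `R = Rₑ` is `Π⁰₁`, then
either there is a tent whose tip is omitted by `Rₑ`, although it lies on the base line, or `Rₑ`
contains all tips of height `2⁻ᵉ`, and then it is not locally connected at `(0, 2⁻ᵉ)`.
-/

/-! ### Computable and recursively enumerable predicates -/

section Computability

variable {α β : Type*} [Primcodable α] [Primcodable β]

theorem computablePred_comp {p : β → Prop} {f : α → β} (hp : ComputablePred p)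
    (hf : Computable f) : ComputablePred fun a => p (f a) :=
  let ⟨_, h⟩ := hp
  ⟨inferInstance, h.comp hf⟩

theorem computablePred_and {p q : α → Prop} (hp : ComputablePred p) (hq : ComputablePred q) :
    ComputablePred fun a => p a ∧ q a := by
  classical
  exact ((Primrec.and.to_comp.comp hp.decide hq.decide).of_eq fun a => by simp).computablePred

theorem computablePred_or {p q : α → Prop} (hp : ComputablePred p) (hq : ComputablePred q) :
    ComputablePred fun a => p a ∨ q a :=
  (computablePred_and hp.not hq.not).not.of_eq fun a => by tauto

theorem computablePred_forall_lt {p : α × ℕ → Prop} {n : α → ℕ} (hp : ComputablePred p)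
    (hn : Computable n) : ComputablePred fun a => ∀ i < n a, p (a, i) := by
  classical
  have hstep : Computable₂ fun (a : α) (x : ℕ × Bool) => x.2 && decide (p (a, x.1)) :=
    Primrec.and.to_comp.comp (Computable.snd.comp Computable.snd)
      (hp.decide.comp (Computable.fst.pair (Computable.fst.comp Computable.snd)))
  refine ((Computable.nat_rec hn (Computable.const true) hstep).of_eq fun a => ?_).computablePred
  induction n a with
  | zero => simp
  | succ k ih => simp only [ih, Nat.forall_lt_succ_right, Bool.decide_and]

theorem computablePred_exists_lt {p : α × ℕ → Prop} {n : α → ℕ} (hp : ComputablePred p)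
    (hn : Computable n) : ComputablePred fun a => ∃ i < n a, p (a, i) :=
  (computablePred_forall_lt hp.not hn).not.of_eq fun a => by push Not; rfl

theorem computable_ite {c : α → Prop} [DecidablePred c] {f g : α → β} (hc : ComputablePred c)
    (hf : Computable f) (hg : Computable g) : Computable fun a => if c a then f a else g a :=
  (hc.decide.cond hf hg).of_eq fun _ => Bool.cond_decide ..

theorem computable_of_graph {f : α → ℕ}
    (hf : ComputablePred fun x : α × ℕ => f x.1 = x.2) : Computable f := by
  classical
  refine (Computable.find hf fun a => ⟨f a, rfl⟩).of_eq fun a => ?_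
  exact (Nat.find_spec (p := fun n => f a = n) ⟨f a, rfl⟩).symm

theorem rePred_comp {p : β → Prop} {f : α → β} (hp : REPred p) (hf : Computable f) :
    REPred fun a => p (f a) :=
  Partrec.comp hp hf

theorem rePred_exists_nat {p : α × ℕ → Prop} (hp : ComputablePred p) :
    REPred fun a => ∃ n, p (a, n) := by
  classical
  have hsearch : Partrec fun a => Nat.rfind fun n => Part.some (decide (p (a, n))) :=
    Partrec.rfind hp.decide.partrec
  refine hsearch.dom_re.of_eq fun a => Nat.rfind_dom.trans ?_
  simp only [Part.mem_some_iff, true_eq_decide_iff, Part.some_dom, implies_true, and_true]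

theorem rePred_exists {p : α × β → Prop} (hp : ComputablePred p) :
    REPred fun a => ∃ b, p (a, b) := by
  classical
  have hdecode : Computable fun x : α × ℕ =>
      (Encodable.decode (α := β) x.2).any fun b => decide (p (x.1, b)) :=
    (Computable.option_casesOn (Computable.decode.comp Computable.snd) (Computable.const false)
      (hp.decide.comp ((Computable.fst.comp Computable.fst).pair Computable.snd)).to₂).of_eq
      fun x => by cases Encodable.decode (α := β) x.2 <;> rfl
  refine (rePred_exists_nat (ComputablePred.computable_iff.2 ⟨_, hdecode, rfl⟩)).of_eq fun a => ?_
  simp only [Option.any_eq_true, decide_eq_true_eq]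
  exact ⟨fun ⟨_, b, _, hb⟩ => ⟨b, hb⟩, fun ⟨b, hb⟩ => ⟨_, b, Encodable.encodek b, hb⟩⟩

open Nat.Partrec (Code)

/-- The `e`-th program halts on the code of `a` within `k` steps. -/
def HaltsWithin (e : ℕ) (a : α) (k : ℕ) : Prop :=
  (Code.evaln k (Denumerable.ofNat Code e) (Encodable.encode a)).isSome

theorem computablePred_haltsWithin :
    ComputablePred fun x : (ℕ × α) × ℕ => HaltsWithin x.1.1 x.1.2 x.2 := by
  have hinput : Computable fun x : (ℕ × α) × ℕ =>
      ((x.2, Denumerable.ofNat Code x.1.1), Encodable.encode x.1.2) :=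
    (Computable.snd.pair ((Computable.ofNat Code).comp (Computable.fst.comp Computable.fst))).pair
      (Computable.encode.comp (Computable.snd.comp Computable.fst))
  exact ComputablePred.computable_iff.2
    ⟨_, Primrec.option_isSome.to_comp.comp (Code.primrec_evaln.to_comp.comp hinput), rfl⟩

theorem exists_index_of_rePred {p : α → Prop} (hp : REPred p) :
    ∃ e, ∀ a, p a ↔ ∃ k, HaltsWithin e a k := by
  obtain ⟨c, hc⟩ := Code.exists_code.1 hp
  refine ⟨Encodable.encode c, fun a => ?_⟩
  have hdom : (Code.eval c (Encodable.encode a)).Dom ↔ p a := by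
    simp [hc, Part.assert]
  rw [← hdom, Part.dom_iff_mem]
  simp only [HaltsWithin, Denumerable.ofNat_encode, Option.isSome_iff_exists,
    Code.evaln_complete, Option.mem_def]
  exact exists_comm

theorem exists_stages_of_rePred {p : α → Prop} (hp : REPred p) :
    ∃ q : α × ℕ → Prop, ComputablePred q ∧ ∀ a, p a ↔ ∃ k, q (a, k) := by
  obtain ⟨e, he⟩ := exists_index_of_rePred hp
  refine ⟨fun x => HaltsWithin e x.1 x.2, ?_, he⟩
  exact computablePred_comp computablePred_haltsWithin
    (((Computable.const e).pair Computable.fst).pair Computable.snd)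

theorem computablePred_and_forall_lt_not {p : α × ℕ → Prop} (hp : ComputablePred p) :
    ComputablePred fun x : α × ℕ => p x ∧ ∀ j < x.2, ¬ p (x.1, j) :=
  computablePred_and hp <| computablePred_forall_lt
    (p := fun y : (α × ℕ) × ℕ => ¬ p (y.1.1, y.2))
    (computablePred_comp hp ((Computable.fst.comp Computable.fst).pair Computable.snd)).not
    Computable.snd

-- Among the pairs `(a, m)` keep only the one whose witness is found first.
theorem exists_rePred_uniformization {Q : α × ℕ → Prop} (hQ : REPred Q) :
    ∃ S : α × ℕ → Prop, REPred S ∧ (∀ x, S x → Q x) ∧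
      (∀ a m m', S (a, m) → S (a, m') → m = m') ∧ ∀ x, Q x → ∃ m, S (x.1, m) := by
  classical
  obtain ⟨q, hq, hQq⟩ := exists_stages_of_rePred hQ
  let found (x : α × ℕ) : Prop := q ((x.1, x.2.unpair.1), x.2.unpair.2)
  have hunpair : Computable fun x : α × ℕ => x.2.unpair :=
    Computable.unpair.comp Computable.snd
  have hfound : ComputablePred found := computablePred_comp hq
    ((Computable.fst.pair (Computable.fst.comp hunpair)).pair (Computable.snd.comp hunpair))
  let first (x : α × ℕ) : Prop := found x ∧ ∀ j < x.2, ¬ found (x.1, j)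
  have hfirst : ComputablePred first := computablePred_and_forall_lt_not hfound
  refine ⟨fun x => ∃ k, first (x.1, k) ∧ k.unpair.1 = x.2, ?_, ?_, ?_, ?_⟩
  · refine rePred_exists_nat (p := fun y : (α × ℕ) × ℕ =>
      first (y.1.1, y.2) ∧ y.2.unpair.1 = y.1.2) (computablePred_and (computablePred_comp hfirst
        ((Computable.fst.comp Computable.fst).pair Computable.snd)) ?_)
    exact computablePred_comp (p := fun z : ℕ × ℕ => z.1 = z.2) Primrec.eq.computablePred
      ((Computable.fst.comp (Computable.unpair.comp Computable.snd)).pair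
        (Computable.snd.comp Computable.fst))
  · rintro ⟨a, m⟩ ⟨k, hk, rfl⟩
    exact (hQq _).2 ⟨_, hk.1⟩
  · rintro a m m' ⟨k, hk, rfl⟩ ⟨k', hk', rfl⟩
    rcases lt_trichotomy k k' with h | rfl | h
    · exact absurd hk.1 (hk'.2 k h)
    · rfl
    · exact absurd hk'.1 (hk.2 k' h)
  · rintro ⟨a, m⟩ hx
    obtain ⟨k, hk⟩ := (hQq _).1 hx
    have hex : ∃ j, found (a, j) := ⟨Nat.pair m k, by simpa [found] using hk⟩
    exact ⟨_, Nat.find hex, ⟨Nat.find_spec hex, fun j hj => Nat.find_min hex hj⟩, rfl⟩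

end Computability

/-! ### Computability of rational arithmetic -/

section RationalComputability

variable {α : Type*} [Primcodable α]

theorem computablePred_nat_eq {f g : α → ℕ} (hf : Computable f) (hg : Computable g) :
    ComputablePred fun a => f a = g a :=
  computablePred_comp (p := fun z : ℕ × ℕ => z.1 = z.2) Primrec.eq.computablePred (hf.pair hg)

theorem computablePred_nat_lt {f g : α → ℕ} (hf : Computable f) (hg : Computable g) :
    ComputablePred fun a => f a < g a :=
  computablePred_comp (p := fun z : ℕ × ℕ => z.1 < z.2) Primrec.nat_lt.computablePred (hf.pair hg)

theorem computable_nat_add {f g : α → ℕ} (hf : Computable f) (hg : Computable g) :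
    Computable fun a => f a + g a :=
  Primrec.nat_add.to_comp.comp hf hg

theorem computable_nat_mul {f g : α → ℕ} (hf : Computable f) (hg : Computable g) :
    Computable fun a => f a * g a :=
  Primrec.nat_mul.to_comp.comp hf hg

theorem computable_nth {p : ℕ → Prop} (hp : ComputablePred p) (hinf : {n | p n}.Infinite) :
    Computable (Nat.nth p) := by
  classical
  have hstep : Computable₂ fun (_ : ℕ) (x : ℕ × ℕ) => x.2 + if p x.1 then 1 else 0 :=
    computable_nat_add (Computable.snd.comp Computable.snd) (computable_ite
      (computablePred_comp hp (Computable.fst.comp Computable.snd))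
      (Computable.const 1) (Computable.const 0))
  have hcount : Computable (Nat.count p) := by
    refine (Computable.nat_rec Computable.id (Computable.const 0) hstep).of_eq fun n => ?_
    induction n with
    | zero => simp
    | succ n ih => rw [Nat.count_succ, ← ih]; rfl
  refine computable_of_graph ((computablePred_and (computablePred_comp hp Computable.snd)
    (computablePred_nat_eq (hcount.comp Computable.snd) Computable.fst)).of_eq fun x => ?_)
  constructor
  · rintro ⟨hx, hcount⟩
    rw [← hcount, Nat.nth_count hx]
  · rintro hx
    rw [← hx]
    exact ⟨Nat.nth_mem_of_infinite hinf _, Nat.count_nth_of_infinite hinf _⟩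

theorem coprime_iff_forall_lt {a b : ℕ} :
    a.Coprime b ↔ ∀ d < a + b + 1, ¬ (a % d = 0 ∧ b % d = 0) ∨ d = 1 := by
  simp only [← Nat.dvd_iff_mod_eq_zero, ← imp_iff_not_or]
  refine ⟨fun h d _ hd => Nat.eq_one_of_dvd_coprimes h hd.1 hd.2, fun h =>
    h _ ?_ ⟨Nat.gcd_dvd_left a b, Nat.gcd_dvd_right a b⟩⟩
  rcases Nat.eq_zero_or_pos a with rfl | ha
  · simp
  · have := Nat.gcd_le_left b ha
    omega

theorem computablePred_coprime {f g : α → ℕ} (hf : Computable f) (hg : Computable g) :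
    ComputablePred fun a => (f a).Coprime (g a) := by
  have hmod {h : α → ℕ} (hh : Computable h) : ComputablePred fun x : α × ℕ => h x.1 % x.2 = 0 :=
    computablePred_nat_eq (Primrec.nat_mod.to_comp.comp (hh.comp Computable.fst) Computable.snd)
      (Computable.const 0)
  have hbound : Computable fun a => f a + g a + 1 :=
    Computable.succ.comp (computable_nat_add hf hg)
  exact (computablePred_forall_lt (computablePred_or (computablePred_and (hmod hf) (hmod hg)).not
    (computablePred_nat_eq Computable.snd (Computable.const 1))) hbound).of_eq
    fun a => coprime_iff_forall_lt.symm

/-- The code `⟨num, den⟩` of a rational under `Rat.instEncodable`. The `Primcodable` instance of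
`ℚ` uses a different code, the rank of `ratBaseCode q` among all base codes. -/
def ratBaseCode (q : ℚ) : ℕ := @Encodable.encode ℚ Rat.instEncodable q

theorem ratBaseCode_eq_pair (q : ℚ) :
    ratBaseCode q = Nat.pair (Encodable.encode q.num) q.den := rfl

theorem ratBaseCode_injective : Function.Injective ratBaseCode :=
  @Encodable.encode_injective ℚ Rat.instEncodable

theorem natAbs_eq_encode_div_two (z : ℤ) : z.natAbs = (Encodable.encode z + 1) / 2 := by
  cases z with
  | ofNat m => change m = (2 * m + 1) / 2; omega
  | negSucc m => change m + 1 = (2 * m + 1 + 1) / 2; omega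

theorem toNat_eq_ite_encode (z : ℤ) :
    z.toNat = if Encodable.encode z % 2 = 0 then z.natAbs else 0 := by
  cases z with
  | ofNat m => change m = if (2 * m) % 2 = 0 then m else 0; simp
  | negSucc m => change 0 = if (2 * m + 1) % 2 = 0 then m + 1 else 0; simp

theorem toNat_neg_eq_ite_encode (z : ℤ) :
    (-z).toNat = if Encodable.encode z % 2 = 0 then 0 else z.natAbs := by
  rcases z with m | m
  · change (-(m : ℤ)).toNat = if (2 * m) % 2 = 0 then 0 else m
    simp
  · change m + 1 = if (2 * m + 1) % 2 = 0 then 0 else m + 1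
    simp

theorem mem_range_ratBaseCode {k : ℕ} :
    k ∈ range ratBaseCode ↔
      0 < k.unpair.2 ∧ ((k.unpair.1 + 1) / 2).Coprime k.unpair.2 := by
  constructor
  · rintro ⟨q, rfl⟩
    rw [ratBaseCode_eq_pair, Nat.unpair_pair, ← natAbs_eq_encode_div_two]
    exact ⟨q.pos, q.reduced⟩
  · rintro ⟨hpos, hcop⟩
    let z : ℤ := Denumerable.ofNat ℤ k.unpair.1
    have hz : Encodable.encode z = k.unpair.1 := Denumerable.encode_ofNat _
    rw [← hz, ← natAbs_eq_encode_div_two] at hcop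
    refine ⟨⟨z, k.unpair.2, hpos.ne', hcop⟩, ?_⟩
    rw [ratBaseCode_eq_pair, hz, Nat.pair_unpair]

theorem computablePred_mem_range_ratBaseCode :
    ComputablePred fun k => k ∈ range ratBaseCode := by
  have hfst : Computable fun k : ℕ => k.unpair.1 := Computable.fst.comp Computable.unpair
  have hsnd : Computable fun k : ℕ => k.unpair.2 := Computable.snd.comp Computable.unpair
  have habs : Computable fun k : ℕ => (k.unpair.1 + 1) / 2 :=
    Primrec.nat_div.to_comp.comp (Computable.succ.comp hfst) (Computable.const 2)
  exact (computablePred_and (computablePred_nat_lt (Computable.const 0) hsnd)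
    (computablePred_coprime habs hsnd)).of_eq fun k => mem_range_ratBaseCode.symm

theorem ratBaseCode_ofNat_eq_nth (n : ℕ) :
    ratBaseCode (Denumerable.ofNat ℚ n) = Nat.nth (· ∈ range ratBaseCode) n := by
  have hinf : (range ratBaseCode).Infinite := infinite_range_of_injective ratBaseCode_injective
  let := @Encodable.decidableRangeEncode ℚ Rat.instEncodable
  let : Infinite (range (@Encodable.encode ℚ Rat.instEncodable)) := hinf.to_subtype
  let := Nat.Subtype.denumerable (range (@Encodable.encode ℚ Rat.instEncodable))
  let toRange := @Encodable.equivRangeEncode ℚ Rat.instEncodable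
  let rank := Nat.Subtype.ofNat (range (@Encodable.encode ℚ Rat.instEncodable)) n
  have hofNat : Denumerable.ofNat ℚ n = toRange.symm rank :=
    Denumerable.ofEquiv_ofNat _ toRange n
  have hrank : ratBaseCode (Denumerable.ofNat ℚ n) = rank := by
    rw [hofNat]
    exact congrArg Subtype.val (toRange.apply_symm_apply rank)
  rw [hrank, Nat.nth_apply_eq_orderIsoOfNat (p := (· ∈ range ratBaseCode)) hinf]
  exact congrArg Subtype.val Nat.Subtype.orderIsoOfNat_apply.symm

theorem computable_ratBaseCode : Computable ratBaseCode :=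
  ((computable_nth computablePred_mem_range_ratBaseCode
    (infinite_range_of_injective ratBaseCode_injective)).comp Computable.encode).of_eq
    fun q => by
      rw [← ratBaseCode_ofNat_eq_nth]
      exact congrArg ratBaseCode (Denumerable.ofNat_encode (α := ℚ) q)

theorem computable_rat_den : Computable Rat.den :=
  (Computable.snd.comp (Computable.unpair.comp computable_ratBaseCode)).of_eq fun q => by
    rw [ratBaseCode_eq_pair, Nat.unpair_pair]

theorem computable_encode_rat_num : Computable fun q : ℚ => Encodable.encode q.num :=
  (Computable.fst.comp (Computable.unpair.comp computable_ratBaseCode)).of_eq fun q => by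
    rw [ratBaseCode_eq_pair, Nat.unpair_pair]

theorem computable_rat_num_natAbs : Computable fun q : ℚ => q.num.natAbs :=
  (Primrec.nat_div.to_comp.comp (Computable.succ.comp computable_encode_rat_num)
    (Computable.const 2)).of_eq fun q => (natAbs_eq_encode_div_two q.num).symm

theorem computablePred_encode_rat_num_even :
    ComputablePred fun q : ℚ => Encodable.encode q.num % 2 = 0 :=
  computablePred_nat_eq (Primrec.nat_mod.to_comp.comp computable_encode_rat_num
    (Computable.const 2)) (Computable.const 0)

theorem computable_rat_num_toNat : Computable fun q : ℚ => q.num.toNat :=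
  (computable_ite computablePred_encode_rat_num_even computable_rat_num_natAbs
    (Computable.const 0)).of_eq fun q => (toNat_eq_ite_encode q.num).symm

theorem computable_rat_neg_num_toNat : Computable fun q : ℚ => (-q.num).toNat :=
  (computable_ite computablePred_encode_rat_num_even (Computable.const 0)
    computable_rat_num_natAbs).of_eq fun q => (toNat_neg_eq_ite_encode q.num).symm

theorem rat_eq_toNat_sub_toNat_div_den (q : ℚ) :
    q = ((q.num.toNat : ℚ) - (-q.num).toNat) / q.den := by
  have hnum : ((q.num.toNat : ℤ) - (-q.num).toNat : ℤ) = q.num := Int.toNat_sub_toNat_neg q.num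
  have hnum' : (q.num.toNat : ℚ) - (-q.num).toNat = q.num := by exact_mod_cast hnum
  rw [hnum', Rat.num_div_den]

theorem div_sub_eq_div_sub_iff {a b d a' b' d' : ℕ} (hd : d ≠ 0) (hd' : d' ≠ 0) :
    ((a : ℚ) - b) / d = (a' - b') / d' ↔ a * d' + b' * d = a' * d + b * d' := by
  rw [div_eq_div_iff (Nat.cast_ne_zero.2 hd) (Nat.cast_ne_zero.2 hd'), ← Nat.cast_inj (R := ℚ)]
  push_cast
  constructor <;> intro h <;> linarith

theorem computable_rat_iff_exists_fraction {f : α → ℚ} :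
    Computable f ↔ ∃ a b d : α → ℕ, Computable a ∧ Computable b ∧ Computable d ∧
      ∀ x, d x ≠ 0 ∧ f x = ((a x : ℚ) - b x) / d x := by
  constructor
  · exact fun hf => ⟨_, _, _, computable_rat_num_toNat.comp hf,
      computable_rat_neg_num_toNat.comp hf, computable_rat_den.comp hf,
      fun x => ⟨(f x).den_nz, rat_eq_toNat_sub_toNat_div_den (f x)⟩⟩
  rintro ⟨a, b, d, ha, hb, hd, hf⟩
  have hq : Computable fun x : α × ℕ => Denumerable.ofNat ℚ x.2 :=
    (Computable.ofNat ℚ).comp Computable.snd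
  have hfst {g : α → ℕ} (hg : Computable g) : Computable fun x : α × ℕ => g x.1 :=
    hg.comp Computable.fst
  rw [← Computable.encode_iff]
  refine computable_of_graph ((computablePred_nat_eq
    (computable_nat_add (computable_nat_mul (hfst ha) (computable_rat_den.comp hq))
      (computable_nat_mul (computable_rat_neg_num_toNat.comp hq) (hfst hd)))
    (computable_nat_add (computable_nat_mul (computable_rat_num_toNat.comp hq) (hfst hd))
      (computable_nat_mul (hfst hb) (computable_rat_den.comp hq)))).of_eq fun x => ?_)
  rw [← div_sub_eq_div_sub_iff (hf x.1).1 (Rat.den_nz _), ← (hf x.1).2,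
    ← rat_eq_toNat_sub_toNat_div_den]
  exact ⟨fun h => h ▸ Denumerable.encode_ofNat (α := ℚ) x.2,
    fun h => h ▸ (Denumerable.ofNat_encode (α := ℚ) (f x.1)).symm⟩

variable {f g : α → ℚ}

theorem computable_rat_add (hf : Computable f) (hg : Computable g) :
    Computable fun x => f x + g x := by
  obtain ⟨a, b, d, ha, hb, hd, hfrac⟩ := computable_rat_iff_exists_fraction.1 hf
  obtain ⟨a', b', d', ha', hb', hd', hfrac'⟩ := computable_rat_iff_exists_fraction.1 hg
  refine computable_rat_iff_exists_fraction.2 ⟨_, _, _,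
    computable_nat_add (computable_nat_mul ha hd') (computable_nat_mul ha' hd),
    computable_nat_add (computable_nat_mul hb hd') (computable_nat_mul hb' hd),
    computable_nat_mul hd hd', fun x => ⟨mul_ne_zero (hfrac x).1 (hfrac' x).1, ?_⟩⟩
  have hne : (d x : ℚ) ≠ 0 := Nat.cast_ne_zero.2 (hfrac x).1
  have hne' : (d' x : ℚ) ≠ 0 := Nat.cast_ne_zero.2 (hfrac' x).1
  rw [(hfrac x).2, (hfrac' x).2]
  push_cast
  field_simp
  ring

theorem computable_rat_mul (hf : Computable f) (hg : Computable g) :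
    Computable fun x => f x * g x := by
  obtain ⟨a, b, d, ha, hb, hd, hfrac⟩ := computable_rat_iff_exists_fraction.1 hf
  obtain ⟨a', b', d', ha', hb', hd', hfrac'⟩ := computable_rat_iff_exists_fraction.1 hg
  refine computable_rat_iff_exists_fraction.2 ⟨_, _, _,
    computable_nat_add (computable_nat_mul ha ha') (computable_nat_mul hb hb'),
    computable_nat_add (computable_nat_mul ha hb') (computable_nat_mul hb ha'),
    computable_nat_mul hd hd', fun x => ⟨mul_ne_zero (hfrac x).1 (hfrac' x).1, ?_⟩⟩
  rw [(hfrac x).2, (hfrac' x).2, div_mul_div_comm]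
  push_cast
  ring

theorem computable_rat_neg (hf : Computable f) : Computable fun x => -f x :=
  (computable_rat_mul (Computable.const (-1)) hf).of_eq fun x => neg_one_mul (f x)

theorem computable_rat_sub (hf : Computable f) (hg : Computable g) :
    Computable fun x => f x - g x :=
  (computable_rat_add hf (computable_rat_neg hg)).of_eq fun _ => (sub_eq_add_neg _ _).symm

theorem computablePred_rat_lt (hf : Computable f) (hg : Computable g) :
    ComputablePred fun x => f x < g x :=
  (computablePred_nat_lt (Computable.const 0)
    (computable_rat_num_toNat.comp (computable_rat_sub hg hf))).of_eq fun x => by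
      rw [← sub_pos (b := f x), ← Rat.num_pos, Int.lt_toNat, Nat.cast_zero]

theorem computablePred_rat_le (hf : Computable f) (hg : Computable g) :
    ComputablePred fun x => f x ≤ g x :=
  (computablePred_rat_lt hg hf).not.of_eq fun _ => not_lt

theorem computable_rat_abs (hf : Computable f) : Computable fun x => |f x| :=
  (computable_ite (computablePred_rat_le (Computable.const 0) hf) hf
    (computable_rat_neg hf)).of_eq fun x => by
      split_ifs with h
      · exact (abs_of_nonneg h).symm
      · exact (abs_of_neg (not_le.1 h)).symm

theorem computable_rat_pow {n : α → ℕ} (hf : Computable f) (hn : Computable n) :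
    Computable fun x => f x ^ n x := by
  have hstep : Computable₂ fun (x : α) (y : ℕ × ℚ) => y.2 * f x :=
    computable_rat_mul (Computable.snd.comp Computable.snd) (hf.comp Computable.fst)
  refine (Computable.nat_rec hn (Computable.const 1) hstep).of_eq fun x => ?_
  induction n x with
  | zero => simp
  | succ k ih => rw [pow_succ, ← ih]

theorem computable_rat_sum_range {F : α × ℕ → ℚ} {n : α → ℕ} (hF : Computable F)
    (hn : Computable n) : Computable fun x => ∑ k ∈ Finset.range (n x), F (x, k) := by
  have hstep : Computable₂ fun (x : α) (y : ℕ × ℚ) => y.2 + F (x, y.1) :=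
    computable_rat_add (Computable.snd.comp Computable.snd)
      (hF.comp (Computable.fst.pair (Computable.fst.comp Computable.snd)))
  refine (Computable.nat_rec hn (Computable.const 0) hstep).of_eq fun x => ?_
  induction n x with
  | zero => simp
  | succ k ih => rw [Finset.sum_range_succ, ← ih]

end RationalComputability

/-! ### Planar continua above a graph -/

section Arcs

variable {α : Type*} [TopologicalSpace α]

theorem IsArc.symm {A : Set α} {x y : α} (h : IsArc A x y) : IsArc A y x := by
  obtain ⟨φ, hcont, hinj, hrange, hzero, hone⟩ := h
  refine ⟨fun t => φ (unitInterval.symm t), by fun_prop, ?_, ?_, ?_, ?_⟩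
  · exact hinj.comp unitInterval.symm_bijective.injective
  · rw [← hrange]
    exact unitInterval.symm_bijective.surjective.range_comp φ
  · rw [← hone]
    exact congrArg φ unitInterval.symm_zero
  · rw [← hzero]
    exact congrArg φ unitInterval.symm_one

theorem isArc_image_Icc {γ : ℝ → α} {a b : ℝ} (hab : a < b) (hγ : Continuous γ)
    (hinj : Function.Injective γ) : IsArc (γ '' Icc a b) (γ a) (γ b) := by
  let e := iccHomeoI a b hab
  have hval (t : unitInterval) : ((e.symm t : Icc a b) : ℝ) = (b - a) * t + a :=
    iccHomeoI_symm_apply_coe a b hab t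
  refine ⟨fun t => γ (e.symm t), by fun_prop, ?_, ?_, ?_, ?_⟩
  · exact hinj.comp (Subtype.val_injective.comp e.symm.injective)
  · exact (e.symm.surjective.range_comp fun x : Icc a b => γ x).trans (image_eq_range γ _).symm
  · exact congrArg γ ((hval 0).trans (by simp))
  · exact congrArg γ ((hval 1).trans (by simp))

theorem ArcwiseConnectedSet.isPreconnected {X : Set α} (hX : ArcwiseConnectedSet X) :
    IsPreconnected X := by
  refine isPreconnected_of_forall_pair fun x hx y hy => ?_
  rcases eq_or_ne x y with rfl | hxy
  · exact ⟨{x}, by simpa using hx, rfl, rfl, isPreconnected_singleton⟩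
  · obtain ⟨A, hAX, φ, hφ, -, rfl, rfl, rfl⟩ := hX x hx y hy hxy
    exact ⟨range φ, hAX, mem_range_self _, mem_range_self _, isPreconnected_range hφ⟩

theorem hereditarilyUnicoherent_of_inter {X : Set α}
    (hX : ∀ A ⊆ X, ∀ B ⊆ X, IsClosed A → IsClosed B → IsPreconnected A → IsPreconnected B →
      IsPreconnected (A ∩ B)) : HereditarilyUnicoherent X := by
  intro Y hY hYc A B hAY hBY hA hB hAc hBc hAB
  refine ⟨?_, hX A (hAY.trans hY) B (hBY.trans hY) hA hB hAc.isPreconnected hBc.isPreconnected⟩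
  obtain ⟨a, ha⟩ := hAc.nonempty
  obtain ⟨b, hb⟩ := hBc.nonempty
  obtain ⟨z, -, hz⟩ := isPreconnected_closed_iff.1 hYc.2.isPreconnected A B hA hB hAB.ge
    ⟨a, hAY ha, ha⟩ ⟨b, hBY hb, hb⟩
  exact ⟨z, hz⟩

end Arcs

section GraphConvex

/-- `C` lies above the graph of `f` and is convex with respect to the paths that run vertically
down to the graph, along the graph, and vertically up again. -/
structure GraphConvex (f : ℝ → ℝ) (C : Set (ℝ × ℝ)) : Prop where
  le_snd : ∀ p ∈ C, f p.1 ≤ p.2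
  vertical : ∀ {x y₁ y₂ y : ℝ}, (x, y₁) ∈ C → (x, y₂) ∈ C → y ∈ Icc y₁ y₂ → (x, y) ∈ C
  graph : ∀ {p q : ℝ × ℝ}, p ∈ C → q ∈ C → p.1 < q.1 → ∀ x ∈ Icc p.1 q.1, (x, f x) ∈ C

variable {f : ℝ → ℝ} {C D K : Set (ℝ × ℝ)}

theorem GraphConvex.inter (hC : GraphConvex f C) (hD : GraphConvex f D) :
    GraphConvex f (C ∩ D) where
  le_snd p hp := hC.le_snd p hp.1
  vertical h₁ h₂ hy := ⟨hC.vertical h₁.1 h₂.1 hy, hD.vertical h₁.2 h₂.2 hy⟩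
  graph hp hq hlt x hx := ⟨hC.graph hp.1 hq.1 hlt x hx, hD.graph hp.2 hq.2 hlt x hx⟩

/-- The path that descends along `{a} × ℝ` to the graph of `f`, follows the graph over `[a, b]`
and ascends along `{b} × ℝ`; the vertical parts are the parameters outside `[a, b]`. -/
noncomputable def graphPath (f : ℝ → ℝ) (a b s : ℝ) : ℝ × ℝ :=
  (max a (min s b), f (max a (min s b)) + |s - max a (min s b)|)

section graphPath

variable {a b s : ℝ}

theorem graphPath_of_le_left (hs : s ≤ a) :
    graphPath f a b s = (a, f a + (a - s)) := by
  rw [graphPath, max_eq_left ((min_le_left s b).trans hs), abs_sub_comm,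
    abs_of_nonneg (sub_nonneg.2 hs)]

theorem graphPath_of_mem_Icc (hs : s ∈ Icc a b) : graphPath f a b s = (s, f s) := by
  rw [graphPath, min_eq_left hs.2, max_eq_right hs.1, sub_self, abs_zero, add_zero]

theorem graphPath_of_right_le (hab : a < b) (hs : b ≤ s) :
    graphPath f a b s = (b, f b + (s - b)) := by
  rw [graphPath, min_eq_right hs, max_eq_right hab.le, abs_of_nonneg (sub_nonneg.2 hs)]

theorem continuous_graphPath (hf : Continuous f) : Continuous (graphPath f a b) := by
  unfold graphPath
  fun_prop

theorem graphPath_injective (hab : a < b) : Function.Injective (graphPath f a b) := by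
  intro s t hst
  obtain ⟨hfst, hsnd⟩ := Prod.mk.inj hst
  rw [hfst, add_right_inj, abs_eq_abs] at hsnd
  rcases hsnd with h | h
  · linarith
  · simp only [max_def, min_def] at hfst h
    split_ifs at hfst h <;> linarith

theorem GraphConvex.graphPath_mem (hC : GraphConvex f C) {p q : ℝ × ℝ} (hp : p ∈ C) (hq : q ∈ C)
    (hlt : p.1 < q.1) (hs : s ∈ Icc (p.1 - (p.2 - f p.1)) (q.1 + (q.2 - f q.1))) :
    graphPath f p.1 q.1 s ∈ C := by
  rcases le_total s p.1 with h | h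
  · rw [graphPath_of_le_left h]
    exact hC.vertical (hC.graph hp hq hlt p.1 ⟨le_rfl, hlt.le⟩) hp
      ⟨by linarith, by linarith [hs.1]⟩
  rcases le_total s q.1 with h' | h'
  · rw [graphPath_of_mem_Icc ⟨h, h'⟩]
    exact hC.graph hp hq hlt s ⟨h, h'⟩
  · rw [graphPath_of_right_le hlt h']
    exact hC.vertical (hC.graph hp hq hlt q.1 ⟨hlt.le, le_rfl⟩) hq
      ⟨by linarith, by linarith [hs.2]⟩

end graphPath

theorem GraphConvex.exists_isArc_of_fst_lt (hC : GraphConvex f C) (hf : Continuous f)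
    {p q : ℝ × ℝ} (hp : p ∈ C) (hq : q ∈ C) (hlt : p.1 < q.1) : ∃ A ⊆ C, IsArc A p q := by
  have hfp := hC.le_snd p hp
  have hfq := hC.le_snd q hq
  refine ⟨graphPath f p.1 q.1 '' Icc (p.1 - (p.2 - f p.1)) (q.1 + (q.2 - f q.1)), ?_, ?_⟩
  · rintro _ ⟨s, hs, rfl⟩
    exact hC.graphPath_mem hp hq hlt hs
  · have hab : p.1 - (p.2 - f p.1) < q.1 + (q.2 - f q.1) := by linarith
    convert! isArc_image_Icc hab (continuous_graphPath hf) (graphPath_injective hlt)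
    · rw [graphPath_of_le_left (by linarith)]
      ext <;> simp
    · rw [graphPath_of_right_le hlt (by linarith)]
      ext <;> simp

theorem GraphConvex.exists_isArc_of_fst_eq (hC : GraphConvex f C) {x y₁ y₂ : ℝ}
    (h₁ : (x, y₁) ∈ C) (h₂ : (x, y₂) ∈ C) (hlt : y₁ < y₂) :
    ∃ A ⊆ C, IsArc A (x, y₁) (x, y₂) := by
  refine ⟨_, ?_, isArc_image_Icc hlt (Continuous.prodMk_right x) (Prod.mk_right_injective x)⟩
  rintro _ ⟨y, hy, rfl⟩
  exact hC.vertical h₁ h₂ hy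

theorem GraphConvex.arcwiseConnectedSet (hC : GraphConvex f C) (hf : Continuous f) :
    ArcwiseConnectedSet C := by
  have symm {p q : ℝ × ℝ} : (∃ A ⊆ C, IsArc A q p) → ∃ A ⊆ C, IsArc A p q :=
    fun ⟨A, hA, harc⟩ => ⟨A, hA, harc.symm⟩
  rintro ⟨x₁, y₁⟩ hp ⟨x₂, y₂⟩ hq hne
  rcases lt_trichotomy x₁ x₂ with hx | rfl | hx
  · exact hC.exists_isArc_of_fst_lt hf hp hq hx
  · rcases lt_or_gt_of_ne fun h => hne (congrArg (x₁, ·) h) with hy | hy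
    · exact hC.exists_isArc_of_fst_eq hp hq hy
    · exact symm (hC.exists_isArc_of_fst_eq hq hp hy)
  · exact symm (hC.exists_isArc_of_fst_lt hf hq hp hx)

theorem graph_mem_of_isPreconnected (hf : Continuous f)
    (hdense : Dense {x | ∀ y, (x, y) ∈ C → y = f x}) (hclosed : IsClosed C)
    (hconn : IsPreconnected C) {p q : ℝ × ℝ} (hp : p ∈ C) (hq : q ∈ C) (hlt : p.1 < q.1)
    {x : ℝ} (hx : x ∈ Icc p.1 q.1) : (x, f x) ∈ C := by
  have hmem : ∀ z ∈ Ioo p.1 q.1 ∩ {x | ∀ y, (x, y) ∈ C → y = f x}, (z, f z) ∈ C := by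
    rintro z ⟨hz, hthin⟩
    obtain ⟨⟨_, y⟩, hr, rfl⟩ : z ∈ Prod.fst '' C :=
      (hconn.image _ continuous_fst.continuousOn).Icc_subset (mem_image_of_mem _ hp)
        (mem_image_of_mem _ hq) (Ioo_subset_Icc_self hz)
    exact hthin y hr ▸ hr
  have hclosure : x ∈ closure (Ioo p.1 q.1 ∩ {x | ∀ y, (x, y) ∈ C → y = f x}) := by
    refine closure_minimal (hdense.open_subset_closure_inter isOpen_Ioo) isClosed_closure ?_
    rwa [closure_Ioo hlt.ne]
  have hclosed' : IsClosed {z | (z, f z) ∈ C} := hclosed.preimage (by fun_prop)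
  exact closure_minimal hmem hclosed' hclosure

-- If `(x, y) ∉ C`, then the part of `C` above height `y` over a short interval around `x` is
-- relatively clopen.
theorem vertical_mem_of_isPreconnected (hf : Continuous f) (hle : ∀ p ∈ C, f p.1 ≤ p.2)
    (hdense : Dense {x | ∀ y, (x, y) ∈ C → y = f x}) (hclosed : IsClosed C)
    (hconn : IsPreconnected C) {x y₁ y₂ y : ℝ} (h₁ : (x, y₁) ∈ C) (h₂ : (x, y₂) ∈ C)
    (hy : y ∈ Icc y₁ y₂) : (x, y) ∈ C := by
  by_contra hxy
  have hy₁ : y₁ < y := hy.1.lt_of_ne (by rintro rfl; exact hxy h₁)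
  have hy₂ : y < y₂ := hy.2.lt_of_ne (by rintro rfl; exact hxy h₂)
  have hlow : ∀ᶠ z in nhds x, f z < y :=
    hf.continuousAt.eventually_lt continuousAt_const ((hle _ h₁).trans_lt hy₁)
  have hmiss : ∀ᶠ z in nhds x, (z, y) ∉ C :=
    (hclosed.isOpen_compl.preimage (Continuous.prodMk_left y)).mem_nhds hxy
  obtain ⟨l, u, ⟨hlx, hxu⟩, hlu⟩ := mem_nhds_iff_exists_Ioo_subset.1 (hlow.and hmiss)
  obtain ⟨a, hthin_a, hla, hax⟩ := hdense.exists_between hlx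
  obtain ⟨b, hthin_b, hxb, hbu⟩ := hdense.exists_between hxu
  have hIcc {z : ℝ} (hza : a ≤ z) (hzb : z ≤ b) : f z < y ∧ (z, y) ∉ C :=
    hlu ⟨hla.trans_le hza, hzb.trans_lt hbu⟩
  let U : Set (ℝ × ℝ) := Ioo a b ×ˢ Ioi y
  let V : Set (ℝ × ℝ) := (Icc a b ×ˢ Ici y)ᶜ
  have hcover : C ⊆ U ∪ V := by
    rintro ⟨z, t⟩ hzt
    refine or_iff_not_imp_right.2 fun hV => ?_
    obtain ⟨⟨hza, hzb⟩, hyt : y ≤ t⟩ := not_not.1 hV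
    obtain ⟨hfz, hzy⟩ := hIcc hza hzb
    refine ⟨⟨hza.lt_of_ne ?_, hzb.lt_of_ne ?_⟩, hyt.lt_of_ne ?_⟩
    · rintro rfl
      exact (hyt.trans (hthin_a t hzt).le).not_gt hfz
    · rintro rfl
      exact (hyt.trans (hthin_b t hzt).le).not_gt hfz
    · rintro rfl
      exact hzy hzt
  obtain ⟨r, -, hrU, hrV⟩ := hconn U V (isOpen_Ioo.prod isOpen_Ioi)
    (isClosed_Icc.prod isClosed_Ici).isOpen_compl hcover ⟨_, h₂, ⟨hax, hxb⟩, hy₂⟩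
    ⟨_, h₁, fun h => h.2.not_gt hy₁⟩
  exact hrV ⟨Ioo_subset_Icc_self hrU.1, Ioi_subset_Ici_self hrU.2⟩

theorem graphConvex_of_isPreconnected (hf : Continuous f) (hle : ∀ p ∈ C, f p.1 ≤ p.2)
    (hdense : Dense {x | ∀ y, (x, y) ∈ C → y = f x}) (hclosed : IsClosed C)
    (hconn : IsPreconnected C) : GraphConvex f C where
  le_snd := hle
  vertical := vertical_mem_of_isPreconnected hf hle hdense hclosed hconn
  graph hp hq hlt _ hx := graph_mem_of_isPreconnected hf hdense hclosed hconn hp hq hlt hx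

theorem dense_fiber_eq_mono (hCK : C ⊆ K) (hdense : Dense {x | ∀ y, (x, y) ∈ K → y = f x}) :
    Dense {x | ∀ y, (x, y) ∈ C → y = f x} := by
  refine hdense.mono fun x hx y hy => ?_
  exact hx y (hCK hy)

theorem GraphConvex.of_isPreconnected_subset (hK : GraphConvex f K) (hf : Continuous f)
    (hdense : Dense {x | ∀ y, (x, y) ∈ K → y = f x}) (hCK : C ⊆ K) (hclosed : IsClosed C)
    (hconn : IsPreconnected C) : GraphConvex f C :=
  graphConvex_of_isPreconnected hf (fun p hp => hK.le_snd p (hCK hp))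
    (dense_fiber_eq_mono hCK hdense) hclosed hconn

theorem GraphConvex.isDendroid (hK : GraphConvex f K) (hf : Continuous f)
    (hdense : Dense {x | ∀ y, (x, y) ∈ K → y = f x}) (hcompact : IsCompact K)
    (hne : K.Nonempty) : IsDendroid K := by
  have harc := hK.arcwiseConnectedSet hf
  refine ⟨⟨hcompact, hne, harc.isPreconnected⟩, harc, hereditarilyUnicoherent_of_inter ?_⟩
  intro A hAK B hBK hA hB hAconn hBconn
  have hAconv := hK.of_isPreconnected_subset hf hdense hAK hA hAconn
  have hBconv := hK.of_isPreconnected_subset hf hdense hBK hB hBconn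
  exact ((hAconv.inter hBconv).arcwiseConnectedSet hf).isPreconnected

-- A small connected neighbourhood of `q` stays above the graph, hence it cannot cross the thin
-- fibers that separate it from the points `p i`.
theorem not_locallyConnectedSpace_of_tendsto {ι : Type*} {l : Filter ι} [l.NeBot]
    (hf : Continuous f) (hdense : Dense {x | ∀ y, (x, y) ∈ C → y = f x}) {p : ι → ℝ × ℝ}
    {q : ℝ × ℝ} (hp : ∀ i, p i ∈ C) (hq : q ∈ C) (hlim : Filter.Tendsto p l (nhds q))
    (hne : ∀ i, (p i).1 ≠ q.1) (hlt : f q.1 < q.2) : ¬LocallyConnectedSpace C := by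
  intro hloc
  have hU : {r : C | f r.1.1 < r.1.2} ∈ nhds (⟨q, hq⟩ : C) :=
    (isOpen_lt (by fun_prop) (by fun_prop)).mem_nhds hlt
  obtain ⟨V, ⟨hVopen, hqV, hVconn⟩, hVU⟩ :=
    (locallyConnectedSpace_iff_hasBasis_isOpen_isConnected.1 hloc _).mem_iff.1 hU
  have hlimC : Filter.Tendsto (fun i => (⟨p i, hp i⟩ : C)) l (nhds ⟨q, hq⟩) :=
    tendsto_subtype_rng.2 hlim
  obtain ⟨i, hi⟩ := (hlimC.eventually (hVopen.mem_nhds hqV)).exists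
  have himage : IsPreconnected ((fun r : C => r.1.1) '' V) :=
    hVconn.isPreconnected.image _ (by fun_prop)
  obtain ⟨z, hzthin, hz⟩ := hdense.exists_between (inf_lt_sup.2 (hne i))
  obtain ⟨r, hrV, rfl⟩ := himage.ordConnected.uIcc_subset ⟨_, hi, rfl⟩ ⟨_, hqV, rfl⟩
    (Ioo_subset_Icc_self hz)
  exact (hVU hrV).ne' (hzthin _ r.2)

end GraphConvex

/-! ### Computable closed subsets of the plane -/

/-- The point of `ℝ²` with the given rational coordinates. -/
def ratPoint (p : ℚ × ℚ) : ℝ × ℝ := (p.1, p.2)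

theorem exists_dist_ratPoint_lt (x : ℝ × ℝ) {ε : ℝ} (hε : 0 < ε) : ∃ p, dist x (ratPoint p) < ε :=
  (Rat.denseRange_cast.prodMap Rat.denseRange_cast).exists_dist_lt x hε

theorem dist_ratPoint_add_lt_iff {p q : ℚ × ℚ} {t r : ℚ} :
    dist (ratPoint p) (ratPoint q) + t < r ↔ |p.1 - q.1| + t < r ∧ |p.2 - q.2| + t < r := by
  simp only [ratPoint, Prod.dist_eq, Real.dist_eq, ← max_add_add_right, max_lt_iff]
  exact_mod_cast Iff.rfl

theorem computablePred_dist_ratPoint_add_lt {α : Type*} [Primcodable α] {p q : α → ℚ × ℚ}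
    {t r : α → ℚ} (hp : Computable p) (hq : Computable q) (ht : Computable t)
    (hr : Computable r) :
    ComputablePred fun a => dist (ratPoint (p a)) (ratPoint (q a)) + t a < (r a : ℝ) := by
  simp only [dist_ratPoint_add_lt_iff]
  have hcoord {u v : α → ℚ} (hu : Computable u) (hv : Computable v) :
      ComputablePred fun a => |u a - v a| + t a < r a :=
    computablePred_rat_lt (computable_rat_add (computable_rat_abs (computable_rat_sub hu hv)) ht) hr
  exact computablePred_and (hcoord (Computable.fst.comp hp) (Computable.fst.comp hq))
    (hcoord (Computable.snd.comp hp) (Computable.snd.comp hq))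

theorem exists_mul_pow_half_lt (C : ℕ) {ε : ℝ} (hε : 0 < ε) : ∃ s : ℕ, C * (1 / 2 : ℝ) ^ s < ε := by
  have htendsto : Filter.Tendsto (fun s : ℕ => C * (1 / 2 : ℝ) ^ s) Filter.atTop (nhds 0) := by
    simpa using (tendsto_pow_atTop_nhds_zero_of_lt_one (r := (1 / 2 : ℝ)) (by norm_num)
      (by norm_num)).const_mul (C : ℝ)
  exact (htendsto.eventually_lt_const hε).exists

/-- `near (p, s)` decides, up to the factor `C`, whether the rational point `p` lies within
`2⁻ˢ` of `K`: it holds if `p` is that close, and implies that `p` is within `C * 2⁻ˢ`. -/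
structure ApproximatesDist (near : (ℚ × ℚ) × ℕ → Prop) (K : Set (ℝ × ℝ)) (C : ℕ) : Prop where
  sound : ∀ p s, near (p, s) → ∃ q ∈ K, dist (ratPoint p) q ≤ C * (1 / 2) ^ s
  complete : ∀ p s, ∀ q ∈ K, dist (ratPoint p) q ≤ (1 / 2) ^ s → near (p, s)

namespace ApproximatesDist

variable {near : (ℚ × ℚ) × ℕ → Prop} {K : Set (ℝ × ℝ)} {C : ℕ}

theorem isPi01Closed (h : ApproximatesDist near K C) (hnear : ComputablePred near)
    (hK : IsClosed K) : IsPi01Closed K := by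
  refine ⟨fun c => ∃ s : ℕ, ¬near (c.1, s) ∧ c.2 ≤ (1 / 2) ^ s, rePred_exists (p := fun a :
    ((ℚ × ℚ) × ℚ) × ℕ => ¬near (a.1.1, a.2) ∧ a.1.2 ≤ (1 / 2) ^ a.2) ?_, ?_⟩
  · exact computablePred_and
      (computablePred_comp hnear ((Computable.fst.comp Computable.fst).pair Computable.snd)).not
      (computablePred_rat_le (Computable.snd.comp Computable.fst)
        (computable_rat_pow (Computable.const _) Computable.snd))
  refine Subset.antisymm (fun x hx => ⟨trivial, ?_⟩) fun x hx => by_contra fun hxK => hx.2 ?_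
  · simp only [mem_iUnion, not_exists]
    rintro c ⟨s, hfar, hc⟩ hball
    have hcs : (c.2 : ℝ) ≤ (1 / 2) ^ s := by simpa using (Rat.cast_le (K := ℝ)).2 hc
    exact hfar (h.complete c.1 s x hx ((dist_comm _ _).trans_le (hball.le.trans hcs)))
  · obtain ⟨ε, hε, hεK⟩ := Metric.isOpen_iff.1 hK.isOpen_compl x hxK
    obtain ⟨s, hs⟩ := exists_mul_pow_half_lt (C + 1) hε
    obtain ⟨p, hp⟩ := exists_dist_ratPoint_lt x (ε := (1 / 2) ^ s) (by positivity)
    refine mem_biUnion (x := (p, (1 / 2) ^ s)) ⟨s, fun hn => ?_, le_rfl⟩ ?_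
    · obtain ⟨q, hqK, hpq⟩ := h.sound p s hn
      refine hεK ?_ hqK
      rw [mem_ball, dist_comm]
      push_cast at hs
      linarith [dist_triangle x (ratPoint p) q]
    · change dist x (ratPoint p) < (((1 / 2) ^ s : ℚ) : ℝ)
      push_cast
      exact hp

theorem inter_ballOfCode_nonempty_iff (h : ApproximatesDist near K C) (c : (ℚ × ℚ) × ℚ) :
    (K ∩ ballOfCode c).Nonempty ↔ ∃ a : (ℚ × ℚ) × ℕ,
      near a ∧ dist (ratPoint a.1) (ratPoint c.1) + (C * (1 / 2) ^ a.2 : ℚ) < (c.2 : ℝ) := by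
  constructor
  · rintro ⟨x, hxK, hxc⟩
    change dist x (ratPoint c.1) < c.2 at hxc
    obtain ⟨s, hs⟩ := exists_mul_pow_half_lt (C + 1) (sub_pos.2 hxc)
    obtain ⟨p, hp⟩ := exists_dist_ratPoint_lt x (ε := (1 / 2) ^ s) (by positivity)
    rw [dist_comm] at hp
    refine ⟨(p, s), h.complete p s x hxK hp.le, ?_⟩
    push_cast at hs ⊢
    linarith [dist_triangle (ratPoint p) x (ratPoint c.1)]
  · rintro ⟨⟨p, s⟩, hps, hpc⟩
    obtain ⟨q, hqK, hpq⟩ := h.sound p s hps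
    refine ⟨q, hqK, ?_⟩
    change dist q (ratPoint c.1) < c.2
    rw [dist_comm] at hpq
    push_cast at hpc
    linarith [dist_triangle q (ratPoint p) (ratPoint c.1)]

theorem isCEClosed (h : ApproximatesDist near K C) (hnear : ComputablePred near) :
    IsCEClosed K := by
  simp only [IsCEClosed, h.inter_ballOfCode_nonempty_iff]
  refine rePred_exists (p := fun a : ((ℚ × ℚ) × ℚ) × ((ℚ × ℚ) × ℕ) =>
    near a.2 ∧ dist (ratPoint a.2.1) (ratPoint a.1.1) + (C * (1 / 2) ^ a.2.2 : ℚ) < (a.1.2 : ℝ))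
    (computablePred_and (computablePred_comp hnear Computable.snd) ?_)
  exact computablePred_dist_ratPoint_add_lt (Computable.fst.comp Computable.snd)
    (Computable.fst.comp Computable.fst)
    (computable_rat_mul (Computable.const _)
      (computable_rat_pow (Computable.const _) (Computable.snd.comp Computable.snd)))
    (Computable.snd.comp Computable.fst)

theorem isComputableClosed (h : ApproximatesDist near K C) (hnear : ComputablePred near)
    (hK : IsClosed K) : IsComputableClosed K :=
  ⟨h.isPi01Closed hnear hK, h.isCEClosed hnear⟩

end ApproximatesDist

/-! ### The comb -/

section Teeth

/-- The abscissa of the `n`-th tooth of the comb. -/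
noncomputable def toothPos (n : ℕ) : ℝ := (1 / 2) ^ n

/-- The height of the `n`-th tooth of the comb. It depends only on the first component of the
pair coded by `n`, so every value `2⁻ᵉ` is attained by infinitely many teeth. -/
noncomputable def toothHeight (n : ℕ) : ℝ := (1 / 2) ^ n.unpair.1

/-- The top of the `n`-th tooth of the comb. -/
noncomputable def toothTip (n : ℕ) : ℝ × ℝ := (toothPos n, toothHeight n)

theorem toothPos_pos (n : ℕ) : 0 < toothPos n := by unfold toothPos; positivity

theorem toothPos_le_one (n : ℕ) : toothPos n ≤ 1 := pow_le_one₀ (by norm_num) (by norm_num)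

theorem toothPos_antitone : Antitone toothPos :=
  fun _ _ h => pow_le_pow_of_le_one (by norm_num) (by norm_num) h

theorem tendsto_toothPos : Filter.Tendsto toothPos Filter.atTop (nhds 0) :=
  tendsto_pow_atTop_nhds_zero_of_lt_one (by norm_num) (by norm_num)

theorem toothPos_le_half_of_lt {n m : ℕ} (h : n < m) : toothPos m ≤ toothPos n / 2 := by
  have hsucc : toothPos (n + 1) = toothPos n / 2 := by simp only [toothPos, pow_succ]; ring
  exact hsucc ▸ toothPos_antitone h

theorem toothHeight_pos (n : ℕ) : 0 < toothHeight n := by unfold toothHeight; positivity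

theorem toothHeight_le_one (n : ℕ) : toothHeight n ≤ 1 :=
  pow_le_one₀ (by norm_num) (by norm_num)

theorem toothPos_le_toothHeight (n : ℕ) : toothPos n ≤ toothHeight n :=
  pow_le_pow_of_le_one (by norm_num) (by norm_num) n.unpair_left_le

/-- The spine `{0} × (-∞, 1]` and the vertical rays hanging down from the tips of the teeth. -/
def whiskers : Set (ℝ × ℝ) := {0} ×ˢ Iic 1 ∪ ⋃ n, {toothPos n} ×ˢ Iic (toothHeight n)

theorem whiskers_downward {x y₁ y₂ : ℝ} (h : (x, y₂) ∈ whiskers) (hy : y₁ ≤ y₂) :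
    (x, y₁) ∈ whiskers := by
  simp only [whiskers, mem_union, mem_iUnion, mem_prod, mem_Iic] at h ⊢
  exact h.imp (fun h => ⟨h.1, hy.trans h.2⟩) fun ⟨n, h⟩ => ⟨n, h.1, hy.trans h.2⟩

-- All but finitely many whiskers lie in an arbitrarily thin strip to the right of the spine.
theorem whiskers_eq_iInter : whiskers =
    ⋂ N, (Icc 0 (toothPos N) ×ˢ Iic 1 ∪ ⋃ n < N, {toothPos n} ×ˢ Iic (toothHeight n)) := by
  ext ⟨x, y⟩
  simp only [whiskers, mem_union, mem_iInter, mem_iUnion, mem_prod, mem_singleton_iff, mem_Iic,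
    mem_Icc, exists_prop]
  constructor
  · rintro (⟨rfl, hy⟩ | ⟨n, rfl, hy⟩) N
    · exact Or.inl ⟨⟨le_rfl, (toothPos_pos N).le⟩, hy⟩
    · rcases lt_or_ge n N with hn | hn
      · exact Or.inr ⟨n, hn, rfl, hy⟩
      · exact Or.inl ⟨⟨(toothPos_pos n).le, toothPos_antitone hn⟩, hy.trans (toothHeight_le_one n)⟩
  · intro h
    by_cases htooth : ∃ n, x = toothPos n ∧ y ≤ toothHeight n
    · exact Or.inr htooth
    · have hstrip (N : ℕ) : (0 ≤ x ∧ x ≤ toothPos N) ∧ y ≤ 1 :=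
        (h N).resolve_right fun ⟨n, _, hn⟩ => htooth ⟨n, hn⟩
      have hx : x ≤ 0 := ge_of_tendsto' tendsto_toothPos fun N => (hstrip N).1.2
      exact Or.inl ⟨hx.antisymm (hstrip 0).1.1, (hstrip 0).2⟩

theorem isClosed_whiskers : IsClosed whiskers := by
  rw [whiskers_eq_iInter]
  exact isClosed_iInter fun N => (isClosed_Icc.prod isClosed_Iic).union
    ((finite_lt_nat N).isClosed_biUnion fun n _ => isClosed_singleton.prod isClosed_Iic)

end Teeth

/-- Admissible half-widths of the tents: they are small enough for the tents to be disjoint, and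
no two tents of positive width have the same height. -/
structure IsTentWidth (w : ℕ → ℝ) : Prop where
  nonneg : ∀ n, 0 ≤ w n
  le_quarter : ∀ n, w n ≤ toothPos n / 4
  injOn : InjOn (fun n => n.unpair.1) (Function.support w)

/-- The piecewise linear function with peak `toothTip n` that vanishes outside the interval of
half-width `w n`. It is `0` if `w n = 0`, thanks to `x / 0 = 0`. -/
noncomputable def tent (w : ℕ → ℝ) (n : ℕ) (x : ℝ) : ℝ :=
  toothHeight n * (max 0 (w n - |x - toothPos n|) / w n)

/-- The sum of the tents, whose graph is the curve carrying the remaining teeth. -/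
noncomputable def ridge (w : ℕ → ℝ) (x : ℝ) : ℝ := ∑' n, tent w n x

/-- The comb: the graph of `ridge w` over `[-2, 2]`, with a spine of height `1` over `0` and with
a vertical tooth over every `toothPos n` at which there is no tent. -/
def comb (w : ℕ → ℝ) : Set (ℝ × ℝ) :=
  {p | p.1 ∈ Icc (-2) 2 ∧ ridge w p.1 ≤ p.2 ∧ (p.2 ≤ ridge w p.1 ∨ p ∈ whiskers)}

/-- The part of the `x`-axis contained in the comb. -/
def combFloor (w : ℕ → ℝ) : Set (ℝ × ℝ) :=
  {p | p.1 ∈ Icc (-2) 2 ∧ p.2 = 0 ∧ ∀ n, w n ≤ |p.1 - toothPos n|}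

/-- The `n`-th tooth of the comb: the two sides of the tent, or a vertical segment if
`w n = 0`. -/
def combTooth (w : ℕ → ℝ) (n : ℕ) : Set (ℝ × ℝ) :=
  {p | p.2 ∈ Icc 0 (toothHeight n) ∧ |p.1 - toothPos n| = w n * (1 - p.2 / toothHeight n)}

section Comb

variable {w : ℕ → ℝ} {n : ℕ} {x : ℝ}

theorem IsTentWidth.eq_of_abs_sub_le (hw : IsTentWidth w) {m : ℕ} (hn : |x - toothPos n| ≤ w n)
    (hm : |x - toothPos m| ≤ w m) : n = m := by
  wlog hlt : n < m generalizing n m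
  · rcases (not_lt.1 hlt).eq_or_lt with rfl | hgt
    · rfl
    · exact (this hm hn hgt).symm
  exfalso
  linarith [hw.le_quarter n, hw.le_quarter m, toothPos_le_half_of_lt hlt, toothPos_pos n,
    (abs_le.1 hn).1, (abs_le.1 hm).2]

theorem IsTentWidth.le_abs_zero_sub (hw : IsTentWidth w) (n : ℕ) : w n ≤ |0 - toothPos n| := by
  rw [zero_sub, abs_neg, abs_of_pos (toothPos_pos n)]
  linarith [hw.le_quarter n, toothPos_pos n]

theorem IsTentWidth.mem_Icc_of_abs_sub_le (hw : IsTentWidth w) (hx : |x - toothPos n| ≤ w n) :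
    x ∈ Icc (-2) 2 := by
  have hn := hw.le_quarter n
  have := toothPos_pos n
  have := toothPos_le_one n
  rw [abs_le] at hx
  exact ⟨by linarith, by linarith⟩

theorem tent_nonneg (hw : 0 ≤ w n) : 0 ≤ tent w n x :=
  mul_nonneg (toothHeight_pos n).le (div_nonneg (le_max_left _ _) hw)

theorem tent_le_toothHeight (hw : 0 ≤ w n) : tent w n x ≤ toothHeight n :=
  mul_le_of_le_one_right (toothHeight_pos n).le
    (div_le_one_of_le₀ (max_le hw (sub_le_self _ (abs_nonneg _))) hw)

theorem tent_eq_zero (h : w n ≤ |x - toothPos n|) : tent w n x = 0 := by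
  rw [tent, max_eq_left (sub_nonpos.2 h), zero_div, mul_zero]

theorem tent_eq_of_abs_sub_le (h : |x - toothPos n| ≤ w n) :
    tent w n x = toothHeight n * ((w n - |x - toothPos n|) / w n) := by
  rw [tent, max_eq_right (sub_nonneg.2 h)]

theorem tent_toothPos (hw : 0 < w n) : tent w n (toothPos n) = toothHeight n := by
  rw [tent_eq_of_abs_sub_le (by simpa using hw.le)]
  simp [hw.ne']

theorem continuous_tent : Continuous (tent w n) := by
  unfold tent
  fun_prop

theorem ridge_nonneg (hw : IsTentWidth w) : 0 ≤ ridge w x :=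
  tsum_nonneg fun n => tent_nonneg (hw.nonneg n)

theorem ridge_eq_zero (h : ∀ n, w n ≤ |x - toothPos n|) : ridge w x = 0 := by
  simp only [ridge, fun n => tent_eq_zero (h n), tsum_zero]

theorem ridge_eq_tent (hw : IsTentWidth w) (h : |x - toothPos n| ≤ w n) :
    ridge w x = tent w n x :=
  tsum_eq_single n fun _ hm => tent_eq_zero <| le_of_not_ge fun hle =>
    hm (hw.eq_of_abs_sub_le hle h)

theorem ridge_toothPos (hw : IsTentWidth w) (hn : 0 < w n) :
    ridge w (toothPos n) = toothHeight n := by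
  rw [ridge_eq_tent hw (n := n) (by simpa using hn.le), tent_toothPos hn]

theorem ridge_le_one (hw : IsTentWidth w) : ridge w x ≤ 1 := by
  by_cases h : ∀ n, w n ≤ |x - toothPos n|
  · exact (ridge_eq_zero h).trans_le zero_le_one
  · push Not at h
    obtain ⟨n, hn⟩ := h
    rw [ridge_eq_tent hw hn.le]
    exact (tent_le_toothHeight (hw.nonneg n)).trans (toothHeight_le_one n)

theorem IsTentWidth.summable_indicator_toothHeight (hw : IsTentWidth w) :
    Summable ((Function.support w).indicator toothHeight) :=
  summable_subtype_iff_indicator.1 (summable_geometric_two.comp_injective hw.injOn.injective)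

theorem continuous_ridge (hw : IsTentWidth w) : Continuous (ridge w) := by
  refine continuous_tsum (fun _ => continuous_tent) hw.summable_indicator_toothHeight fun n x => ?_
  rw [Real.norm_of_nonneg (tent_nonneg (hw.nonneg n))]
  by_cases hn : n ∈ Function.support w
  · rw [indicator_of_mem hn]
    exact tent_le_toothHeight (hw.nonneg n)
  · rw [indicator_of_notMem hn, tent, Function.notMem_support.1 hn, div_zero, mul_zero]

theorem ridge_mem_comb (hx : x ∈ Icc (-2) 2) : (x, ridge w x) ∈ comb w :=
  ⟨hx, le_rfl, Or.inl le_rfl⟩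

theorem isClosed_comb (hw : IsTentWidth w) : IsClosed (comb w) := by
  have hridge := continuous_ridge hw
  exact (isClosed_Icc.preimage continuous_fst).inter
    ((isClosed_le (by fun_prop) continuous_snd).inter
      ((isClosed_le continuous_snd (by fun_prop)).union isClosed_whiskers))

theorem comb_subset_Icc (hw : IsTentWidth w) : comb w ⊆ Icc (-2) 2 ×ˢ Icc 0 1 := by
  rintro ⟨x, y⟩ ⟨hx, hle, hy⟩
  refine ⟨hx, (ridge_nonneg hw).trans hle, ?_⟩
  simp only [whiskers, mem_union, mem_iUnion, mem_prod, mem_Iic] at hy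
  rcases hy with hy | ⟨-, hy⟩ | ⟨n, -, hy⟩
  · exact hy.trans (ridge_le_one hw)
  · exact hy
  · exact hy.trans (toothHeight_le_one n)

theorem isCompact_comb (hw : IsTentWidth w) : IsCompact (comb w) :=
  (isCompact_Icc.prod isCompact_Icc).of_isClosed_subset (isClosed_comb hw) (comb_subset_Icc hw)

theorem graphConvex_comb : GraphConvex (ridge w) (comb w) where
  le_snd _ hp := hp.2.1
  vertical := by
    rintro x y₁ y₂ y h₁ h₂ ⟨hy₁, hy₂⟩
    exact ⟨h₁.1, h₁.2.1.trans hy₁, h₂.2.2.imp hy₂.trans fun h => whiskers_downward h hy₂⟩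
  graph hp hq _ _ hx := ridge_mem_comb ⟨hp.1.1.trans hx.1, hx.2.trans hq.1.2⟩

theorem dense_comb_fiber_eq_ridge : Dense {x | ∀ y, (x, y) ∈ comb w → y = ridge w x} := by
  refine (((countable_range toothPos).insert 0).dense_compl ℝ).mono fun x hx y hy => ?_
  refine (hy.2.2.resolve_right fun h => hx ?_).antisymm hy.2.1
  simp only [whiskers, mem_union, mem_iUnion, mem_prod, mem_singleton_iff] at h
  rcases h with h | ⟨n, h, -⟩
  · exact Or.inl h.1
  · exact Or.inr ⟨n, h.symm⟩

theorem isDendroid_comb (hw : IsTentWidth w) : IsDendroid (comb w) :=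
  graphConvex_comb.isDendroid (continuous_ridge hw) dense_comb_fiber_eq_ridge (isCompact_comb hw)
    ⟨_, ridge_mem_comb (x := 0) (by norm_num)⟩

theorem combFloor_subset_comb : combFloor w ⊆ comb w := by
  rintro ⟨x, y⟩ ⟨hx, rfl, hfloor⟩
  have hridge := ridge_eq_zero hfloor
  exact ⟨hx, hridge.le, Or.inl hridge.ge⟩

theorem combTooth_subset_comb (hw : IsTentWidth w) : combTooth w n ⊆ comb w := by
  rintro ⟨x, y⟩ ⟨⟨hy₀, hy₁⟩, hx⟩
  have hh := toothHeight_pos n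
  have hxw : |x - toothPos n| ≤ w n :=
    hx.trans_le (mul_le_of_le_one_right (hw.nonneg n) (sub_le_self _ (div_nonneg hy₀ hh.le)))
  have htent := (ridge_eq_tent hw hxw).trans (tent_eq_of_abs_sub_le hxw)
  rw [hx] at htent
  rcases (hw.nonneg n).eq_or_lt with hzero | hpos
  · rw [← hzero, div_zero, mul_zero] at htent
    rw [← hzero, zero_mul, abs_eq_zero, sub_eq_zero] at hx
    exact ⟨hw.mem_Icc_of_abs_sub_le hxw, htent.trans_le hy₀,
      Or.inr (Or.inr (mem_iUnion.2 ⟨n, hx, hy₁⟩))⟩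
  · have hy : ridge w x = y := by rw [htent]; field_simp; ring
    exact ⟨hw.mem_Icc_of_abs_sub_le hxw, hy.le, Or.inl hy.ge⟩

theorem spine_subset_comb (hw : IsTentWidth w) : {0} ×ˢ Icc 0 1 ⊆ comb w := by
  rintro ⟨x, y⟩ ⟨rfl, hy⟩
  exact ⟨by norm_num, (ridge_eq_zero hw.le_abs_zero_sub).trans_le hy.1, Or.inr (Or.inl ⟨rfl, hy.2⟩)⟩

theorem ridge_mem_floor_or_tooth (hw : IsTentWidth w) (hx : x ∈ Icc (-2) 2) :
    (x, ridge w x) ∈ combFloor w ∨ ∃ n, (x, ridge w x) ∈ combTooth w n := by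
  by_cases h : ∀ n, w n ≤ |x - toothPos n|
  · exact Or.inl ⟨hx, ridge_eq_zero h, h⟩
  · push Not at h
    obtain ⟨n, hn⟩ := h
    have hpos : 0 < w n := (abs_nonneg _).trans_lt hn
    have hh := toothHeight_pos n
    refine Or.inr ⟨n, ?_⟩
    rw [ridge_eq_tent hw hn.le]
    refine ⟨⟨tent_nonneg hpos.le, tent_le_toothHeight hpos.le⟩, ?_⟩
    simp only [tent_eq_of_abs_sub_le hn.le]
    field_simp
    ring

theorem mem_comb_iff (hw : IsTentWidth w) {p : ℝ × ℝ} :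
    p ∈ comb w ↔ p ∈ combFloor w ∨ (∃ n, p ∈ combTooth w n) ∨ p ∈ {0} ×ˢ Icc 0 1 := by
  constructor
  · obtain ⟨x, y⟩ := p
    rintro ⟨hx, hle, hy | ⟨hx₀, hy⟩ | hwhisker⟩
    · obtain rfl : ridge w x = y := le_antisymm hle hy
      exact (ridge_mem_floor_or_tooth hw hx).imp_right Or.inl
    · exact Or.inr (Or.inr ⟨hx₀, (ridge_nonneg hw).trans hle, hy⟩)
    · obtain ⟨n, rfl, hy⟩ := mem_iUnion.1 hwhisker
      refine Or.inr (Or.inl ⟨n, ⟨(ridge_nonneg hw).trans hle, hy⟩, ?_⟩)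
      rcases (hw.nonneg n).eq_or_lt with hzero | hpos
      · simp [← hzero]
      · obtain rfl : toothHeight n = y := le_antisymm (ridge_toothPos hw hpos ▸ hle) hy
        simp [(toothHeight_pos n).ne']
  · rintro (h | ⟨n, h⟩ | h)
    · exact combFloor_subset_comb h
    · exact combTooth_subset_comb hw h
    · exact spine_subset_comb hw h

end Comb

/-! ### Computability of the comb -/

section NearComb

theorem exists_mem_Icc_abs_sub_le {a b x δ : ℝ} (hab : a ≤ b) (hδ : 0 ≤ δ) (ha : a - δ ≤ x)
    (hb : x ≤ b + δ) : ∃ x' ∈ Icc a b, |x - x'| ≤ δ := by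
  refine ⟨max a (min x b), ⟨le_max_left _ _, max_le hab (min_le_right _ _)⟩, abs_le.2 ⟨?_, ?_⟩⟩
  · have : max a (min x b) ≤ x + δ := max_le (by linarith) ((min_le_left _ _).trans (by linarith))
    linarith
  · have : x - δ ≤ max a (min x b) := le_max_of_le_right (le_min (by linarith) (by linarith))
    linarith

theorem exists_abs_sub_eq (x c : ℝ) {r : ℝ} (hr : 0 ≤ r) :
    ∃ x', |x' - c| = r ∧ |x - x'| = |(|x - c|) - r| := by
  rcases le_total c x with h | h
  · exact ⟨c + r, by rw [add_sub_cancel_left, abs_of_nonneg hr],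
      by rw [abs_of_nonneg (sub_nonneg.2 h), sub_sub]⟩
  · refine ⟨c - r, by rw [sub_sub_cancel_left, abs_neg, abs_of_nonneg hr], ?_⟩
    rw [abs_of_nonpos (sub_nonpos.2 h), ← abs_neg]
    ring_nf

variable {𝕜 : Type*} [Field 𝕜] [LinearOrder 𝕜]

/-- `p` seems to be close to the floor of the comb whose tents have approximate half-widths
`a n`, as far as the first `s` tents and the precision `2⁻ˢ` can tell. -/
def NearFloor (a : ℕ → 𝕜) (s : ℕ) (p : 𝕜 × 𝕜) : Prop :=
  (|p.1| ≤ 2 + (1 / 2) ^ s ∧ |p.2| ≤ (1 / 2) ^ s) ∧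
    ∀ n < s, a n ≤ |p.1 - (1 / 2) ^ n| + (1 / 2) ^ s

/-- `p` seems to be close to one of the first `s` teeth of the comb whose tents have approximate
half-widths `a n`, as far as the precision `2⁻ˢ` can tell. -/
def NearTooth (a : ℕ → 𝕜) (s : ℕ) (p : 𝕜 × 𝕜) : Prop :=
  ∃ n < s, (-(1 / 2) ^ s ≤ p.2 ∧ p.2 ≤ (1 / 2) ^ n.unpair.1 + (1 / 2) ^ s) ∧
    |(|p.1 - (1 / 2) ^ n|) - a n * (1 - p.2 * 2 ^ n.unpair.1)| ≤ 3 * (1 / 2) ^ s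

/-- `p` is close to the spine of the comb. The precision is such that this includes the points
close to the `n`-th tooth for some `n ≥ s`. -/
def NearSpine (s : ℕ) (p : 𝕜 × 𝕜) : Prop :=
  |p.1| ≤ 3 * (1 / 2) ^ s ∧ -(1 / 2) ^ s ≤ p.2 ∧ p.2 ≤ 1 + (1 / 2) ^ s

/-- The disjunction of `NearFloor`, `NearTooth` and `NearSpine`. These predicates make sense over
any ordered field: over `ℚ` they are decidable, over `ℝ` they are compared with the comb. -/
def NearComb (a : ℕ → 𝕜) (s : ℕ) (p : 𝕜 × 𝕜) : Prop :=
  NearFloor a s p ∨ NearTooth a s p ∨ NearSpine s p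

theorem nearComb_ratCast {a : ℕ → ℚ} {s : ℕ} {p : ℚ × ℚ} :
    NearComb (fun n => (a n : ℝ)) s (ratPoint p) ↔ NearComb a s p := by
  simp only [NearComb, NearFloor, NearTooth, NearSpine, ratPoint, ← Rat.cast_le (K := ℝ)]
  push_cast
  rfl

/-- `a` approximates the half-widths `w` from below, with error at most `2⁻ˢ`. -/
structure ApproximatesWidth (a w : ℕ → ℝ) (s : ℕ) : Prop where
  nonneg : ∀ n, 0 ≤ a n
  le : ∀ n, a n ≤ w n
  le_add : ∀ n, w n ≤ a n + (1 / 2) ^ s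

variable {a w : ℕ → ℝ} {s n : ℕ} {x y x' y' : ℝ}

theorem dist_mk_le_iff {δ : ℝ} : dist (x, y) (x', y') ≤ δ ↔ |x - x'| ≤ δ ∧ |y - y'| ≤ δ := by
  rw [Prod.dist_eq, max_le_iff, Real.dist_eq, Real.dist_eq]

theorem div_toothHeight (y : ℝ) (n : ℕ) : y / toothHeight n = y * 2 ^ n.unpair.1 := by
  rw [toothHeight, one_div, inv_pow, div_inv_eq_mul]

theorem IsTentWidth.le_half_pow_of_le (hw : IsTentWidth w) (hn : s ≤ n) : w n ≤ (1 / 2) ^ s := by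
  have hpos : toothPos n ≤ (1 / 2) ^ s := toothPos_antitone hn
  linarith [hw.le_quarter n, toothPos_pos n]

theorem ApproximatesWidth.abs_slope_sub_le (ha : ApproximatesWidth a w s) (hw : IsTentWidth w)
    (hy' : y' ∈ Icc 0 (toothHeight n)) (hy : |y - y'| ≤ (1 / 2) ^ s) :
    |w n * (1 - y' / toothHeight n) - a n * (1 - y / toothHeight n)| ≤ 2 * (1 / 2) ^ s := by
  have hh := toothHeight_pos n
  have hah : a n / toothHeight n ≤ 1 := by
    rw [div_le_one hh]
    linarith [ha.le n, hw.le_quarter n, toothPos_le_toothHeight n]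
  have hratio : y' / toothHeight n ∈ Icc 0 1 :=
    ⟨div_nonneg hy'.1 hh.le, (div_le_one hh).2 hy'.2⟩
  have hwidth : |(w n - a n) * (1 - y' / toothHeight n)| ≤ (1 / 2) ^ s := by
    rw [abs_of_nonneg (mul_nonneg (sub_nonneg.2 (ha.le n)) (sub_nonneg.2 hratio.2))]
    refine (mul_le_of_le_one_right (sub_nonneg.2 (ha.le n)) (sub_le_self _ hratio.1)).trans ?_
    linarith [ha.le_add n]
  have hheight : |a n / toothHeight n * (y - y')| ≤ (1 / 2) ^ s := by
    rw [abs_mul, abs_of_nonneg (div_nonneg (ha.nonneg n) hh.le)]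
    exact (mul_le_of_le_one_left (abs_nonneg _) hah).trans hy
  calc |w n * (1 - y' / toothHeight n) - a n * (1 - y / toothHeight n)|
      = |(w n - a n) * (1 - y' / toothHeight n) + a n / toothHeight n * (y - y')| := by
        congr 1; ring
    _ ≤ 2 * (1 / 2) ^ s := (abs_add_le _ _).trans (by linarith)

theorem ApproximatesWidth.nearComb_of_mem_floor (ha : ApproximatesWidth a w s)
    (hq : (x', y') ∈ combFloor w) (hx : |x - x'| ≤ (1 / 2) ^ s) (hy : |y - y'| ≤ (1 / 2) ^ s) :
    NearComb a s (x, y) := by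
  obtain ⟨hx', rfl, hfloor⟩ := hq
  refine Or.inl ⟨⟨?_, by simpa using hy⟩, fun n _ => ?_⟩
  · linarith [abs_le.2 hx', abs_sub_abs_le_abs_sub x x']
  · have hfar := (ha.le n).trans (hfloor n)
    have htri := abs_sub_le x' x (toothPos n)
    rw [abs_sub_comm x' x] at htri
    change a n ≤ |x - toothPos n| + _
    linarith

theorem ApproximatesWidth.nearComb_of_mem_tooth (ha : ApproximatesWidth a w s)
    (hw : IsTentWidth w) (hq : (x', y') ∈ combTooth w n) (hx : |x - x'| ≤ (1 / 2) ^ s)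
    (hy : |y - y'| ≤ (1 / 2) ^ s) : NearComb a s (x, y) := by
  obtain ⟨⟨hy'₀, hy'₁⟩, hx'⟩ := hq
  have hy_bounds := abs_le.1 hy
  rcases lt_or_ge n s with hn | hn
  · have hslope := abs_le.1 (ha.abs_slope_sub_le hw ⟨hy'₀, hy'₁⟩ hy)
    have hdist := abs_le.1 ((abs_abs_sub_abs_le _ _).trans_eq
      (congrArg abs (sub_sub_sub_cancel_right x x' (toothPos n))) |>.trans hx)
    refine Or.inr (Or.inl ⟨n, hn, ⟨by linarith, ?_⟩, ?_⟩)
    · exact (sub_le_iff_le_add'.1 hy_bounds.2).trans (by gcongr; exact hy'₁)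
    · rw [← div_toothHeight]
      rw [hx'] at hdist
      change |(|x - toothPos n|) - a n * (1 - y / toothHeight n)| ≤ _
      exact abs_le.2 ⟨by linarith, by linarith⟩
  · have hpos : toothPos n ≤ (1 / 2) ^ s := toothPos_antitone hn
    have hx'w : |x' - toothPos n| ≤ w n := hx'.trans_le (mul_le_of_le_one_right (hw.nonneg n)
      (sub_le_self _ (div_nonneg hy'₀ (toothHeight_pos n).le)))
    have hx'_bounds := abs_le.1 (hx'w.trans (hw.le_half_pow_of_le hn))
    have hx_bounds := abs_le.1 hx
    have := toothPos_pos n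
    have := toothHeight_le_one n
    exact Or.inr (Or.inr ⟨abs_le.2 ⟨by linarith, by linarith⟩, by linarith, by linarith⟩)

theorem nearComb_of_mem_spine (hq : (x', y') ∈ ({0} ×ˢ Icc 0 1 : Set (ℝ × ℝ)))
    (hx : |x - x'| ≤ (1 / 2) ^ s) (hy : |y - y'| ≤ (1 / 2) ^ s) : NearComb a s (x, y) := by
  obtain ⟨rfl, hy'⟩ := hq
  rw [sub_zero] at hx
  rw [abs_le] at hy
  have : (0 : ℝ) < (1 / 2) ^ s := by positivity
  exact Or.inr (Or.inr ⟨by linarith, by linarith [hy'.1], by linarith [hy'.2]⟩)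

theorem ApproximatesWidth.nearComb_of_dist_le (ha : ApproximatesWidth a w s) (hw : IsTentWidth w)
    {p q : ℝ × ℝ} (hq : q ∈ comb w) (hpq : dist p q ≤ (1 / 2) ^ s) : NearComb a s p := by
  obtain ⟨hx, hy⟩ := dist_mk_le_iff.1 hpq
  rcases (mem_comb_iff hw).1 hq with hq | ⟨n, hq⟩ | hq
  · exact ha.nearComb_of_mem_floor hq hx hy
  · exact ha.nearComb_of_mem_tooth hw hq hx hy
  · exact nearComb_of_mem_spine hq hx hy

theorem ApproximatesWidth.exists_mem_comb_of_nearFloor (ha : ApproximatesWidth a w s)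
    (hw : IsTentWidth w) (h : NearFloor a s (x, y)) :
    ∃ q ∈ comb w, dist (x, y) q ≤ 5 * (1 / 2) ^ s := by
  obtain ⟨⟨hx, hy⟩, hfar⟩ := h
  have hδ : (0 : ℝ) < (1 / 2) ^ s := by positivity
  have hx_bounds := abs_le.1 hx
  obtain ⟨x₀, hx₀, hxx₀⟩ := exists_mem_Icc_abs_sub_le (a := -2) (b := 2) (x := x) (by norm_num)
    hδ.le (by linarith) (by linarith)
  by_cases hfloor : ∀ n, w n ≤ |x₀ - toothPos n|
  · refine ⟨(x₀, 0), combFloor_subset_comb ⟨hx₀, rfl, hfloor⟩, dist_mk_le_iff.2 ⟨?_, ?_⟩⟩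
    · linarith
    · rw [sub_zero]; linarith
  · push Not at hfloor
    obtain ⟨n, hn⟩ := hfloor
    obtain ⟨x', hx', hx₀x'⟩ := exists_abs_sub_eq x₀ (toothPos n) (hw.nonneg n)
    have hshift : w n - |x₀ - toothPos n| ≤ 3 * (1 / 2) ^ s := by
      rcases lt_or_ge n s with hns | hns
      · have hnear : a n ≤ |x - toothPos n| + (1 / 2) ^ s := hfar n hns
        linarith [ha.le_add n, abs_sub_le x x₀ (toothPos n)]
      · linarith [hw.le_half_pow_of_le hns, abs_nonneg (x₀ - toothPos n)]
    rw [abs_of_neg (sub_neg.2 hn), neg_sub] at hx₀x'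
    refine ⟨(x', 0), combTooth_subset_comb hw (n := n) ⟨⟨le_rfl, (toothHeight_pos n).le⟩, ?_⟩,
      dist_mk_le_iff.2 ⟨?_, ?_⟩⟩
    · simpa using hx'
    · linarith [abs_sub_le x x₀ x']
    · rw [sub_zero]; linarith

theorem ApproximatesWidth.exists_mem_comb_of_nearTooth (ha : ApproximatesWidth a w s)
    (hw : IsTentWidth w) (h : NearTooth a s (x, y)) :
    ∃ q ∈ comb w, dist (x, y) q ≤ 5 * (1 / 2) ^ s := by
  obtain ⟨n, -, ⟨hy₀, hy₁⟩, hside⟩ := h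
  have hδ : (0 : ℝ) < (1 / 2) ^ s := by positivity
  have hh := toothHeight_pos n
  obtain ⟨y', hy', hyy'⟩ := exists_mem_Icc_abs_sub_le hh.le hδ.le (by linarith) hy₁
  have hslope := ha.abs_slope_sub_le hw hy' hyy'
  rw [← div_toothHeight] at hside
  obtain ⟨x', hx', hxx'⟩ := exists_abs_sub_eq x (toothPos n)
    (mul_nonneg (hw.nonneg n) (sub_nonneg.2 ((div_le_one hh).2 hy'.2)))
  refine ⟨(x', y'), combTooth_subset_comb hw ⟨hy', hx'⟩, dist_mk_le_iff.2 ⟨?_, by linarith⟩⟩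
  have htri := abs_sub_le |x - toothPos n| (a n * (1 - y / toothHeight n))
    (w n * (1 - y' / toothHeight n))
  rw [abs_sub_comm] at hslope
  change |(|x - toothPos n|) - a n * (1 - y / toothHeight n)| ≤ _ at hside
  linarith

theorem exists_mem_comb_of_nearSpine (hw : IsTentWidth w) (h : NearSpine s (x, y)) :
    ∃ q ∈ comb w, dist (x, y) q ≤ 5 * (1 / 2) ^ s := by
  obtain ⟨hx, hy₀, hy₁⟩ := h
  have hδ : (0 : ℝ) < (1 / 2) ^ s := by positivity
  obtain ⟨y', hy', hyy'⟩ := exists_mem_Icc_abs_sub_le zero_le_one hδ.le (by linarith) hy₁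
  refine ⟨(0, y'), spine_subset_comb hw ⟨rfl, hy'⟩, dist_mk_le_iff.2 ⟨?_, by linarith⟩⟩
  rw [sub_zero]
  linarith

theorem ApproximatesWidth.exists_mem_comb_of_nearComb (ha : ApproximatesWidth a w s)
    (hw : IsTentWidth w) {p : ℝ × ℝ} (h : NearComb a s p) :
    ∃ q ∈ comb w, dist p q ≤ 5 * (1 / 2) ^ s := by
  rcases h with h | h | h
  · exact ha.exists_mem_comb_of_nearFloor hw h
  · exact ha.exists_mem_comb_of_nearTooth hw h
  · exact exists_mem_comb_of_nearSpine hw h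

end NearComb

section ComputableNearComb

variable {a : ℕ × ℕ → ℚ}

theorem computable_half_pow {α : Type*} [Primcodable α] {n : α → ℕ} (hn : Computable n) :
    Computable fun x => (1 / 2 : ℚ) ^ n x :=
  computable_rat_pow (Computable.const _) hn

theorem computablePred_nearFloor (ha : Computable a) :
    ComputablePred fun x : (ℚ × ℚ) × ℕ => NearFloor (fun n => a (n, x.2)) x.2 x.1 := by
  refine computablePred_and (computablePred_and ?_ ?_) (computablePred_forall_lt
    (p := fun z : ((ℚ × ℚ) × ℕ) × ℕ =>
      a (z.2, z.1.2) ≤ |z.1.1.1 - (1 / 2) ^ z.2| + (1 / 2) ^ z.1.2) ?_ Computable.snd)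
  · exact computablePred_rat_le (computable_rat_abs (Computable.fst.comp Computable.fst))
      (computable_rat_add (Computable.const 2) (computable_half_pow Computable.snd))
  · exact computablePred_rat_le (computable_rat_abs (Computable.snd.comp Computable.fst))
      (computable_half_pow Computable.snd)
  · have hs : Computable fun z : ((ℚ × ℚ) × ℕ) × ℕ => z.1.2 := Computable.snd.comp Computable.fst
    have hx : Computable fun z : ((ℚ × ℚ) × ℕ) × ℕ => z.1.1.1 :=
      Computable.fst.comp (Computable.fst.comp Computable.fst)
    exact computablePred_rat_le (ha.comp (Computable.snd.pair hs)) (computable_rat_add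
      (computable_rat_abs (computable_rat_sub hx (computable_half_pow Computable.snd)))
      (computable_half_pow hs))

theorem computablePred_nearTooth (ha : Computable a) :
    ComputablePred fun x : (ℚ × ℚ) × ℕ => NearTooth (fun n => a (n, x.2)) x.2 x.1 := by
  have hδ : Computable fun z : ((ℚ × ℚ) × ℕ) × ℕ => (1 / 2 : ℚ) ^ z.1.2 :=
    computable_half_pow (Computable.snd.comp Computable.fst)
  have hx : Computable fun z : ((ℚ × ℚ) × ℕ) × ℕ => z.1.1.1 :=
    Computable.fst.comp (Computable.fst.comp Computable.fst)
  have hy : Computable fun z : ((ℚ × ℚ) × ℕ) × ℕ => z.1.1.2 :=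
    Computable.snd.comp (Computable.fst.comp Computable.fst)
  have he : Computable fun z : ((ℚ × ℚ) × ℕ) × ℕ => z.2.unpair.1 :=
    Computable.fst.comp (Computable.unpair.comp Computable.snd)
  have hslope : Computable fun z : ((ℚ × ℚ) × ℕ) × ℕ =>
      a (z.2, z.1.2) * (1 - z.1.1.2 * 2 ^ z.2.unpair.1) :=
    computable_rat_mul (ha.comp (Computable.snd.pair (Computable.snd.comp Computable.fst)))
      (computable_rat_sub (Computable.const 1)
        (computable_rat_mul hy (computable_rat_pow (Computable.const 2) he)))
  refine computablePred_exists_lt (p := fun z : ((ℚ × ℚ) × ℕ) × ℕ =>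
    (-(1 / 2) ^ z.1.2 ≤ z.1.1.2 ∧ z.1.1.2 ≤ (1 / 2) ^ z.2.unpair.1 + (1 / 2) ^ z.1.2) ∧
      |(|z.1.1.1 - (1 / 2) ^ z.2|) - a (z.2, z.1.2) * (1 - z.1.1.2 * 2 ^ z.2.unpair.1)| ≤
        3 * (1 / 2) ^ z.1.2) (computablePred_and (computablePred_and ?_ ?_) ?_) Computable.snd
  · exact computablePred_rat_le (computable_rat_neg hδ) hy
  · exact computablePred_rat_le hy (computable_rat_add (computable_half_pow he) hδ)
  · exact computablePred_rat_le (computable_rat_abs (computable_rat_sub (computable_rat_abs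
      (computable_rat_sub hx (computable_half_pow Computable.snd))) hslope))
      (computable_rat_mul (Computable.const 3) hδ)

theorem computablePred_nearSpine :
    ComputablePred fun x : (ℚ × ℚ) × ℕ => NearSpine x.2 x.1 := by
  have hδ : Computable fun x : (ℚ × ℚ) × ℕ => (1 / 2 : ℚ) ^ x.2 :=
    computable_half_pow Computable.snd
  have hy : Computable fun x : (ℚ × ℚ) × ℕ => x.1.2 := Computable.snd.comp Computable.fst
  exact computablePred_and
    (computablePred_rat_le (computable_rat_abs (Computable.fst.comp Computable.fst))
      (computable_rat_mul (Computable.const 3) hδ))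
    (computablePred_and (computablePred_rat_le (computable_rat_neg hδ) hy)
      (computablePred_rat_le hy (computable_rat_add (Computable.const 1) hδ)))

theorem isComputableClosed_comb {w : ℕ → ℝ} (hw : IsTentWidth w) (ha : Computable a)
    (haw : ∀ s, ApproximatesWidth (fun n => a (n, s)) w s) : IsComputableClosed (comb w) := by
  have happrox : ApproximatesDist (fun x => NearComb (fun n => a (n, x.2)) x.2 x.1) (comb w) 5 :=
    { sound := fun p s h => (haw s).exists_mem_comb_of_nearComb hw (nearComb_ratCast.2 h)
      complete := fun p s q hq hpq => nearComb_ratCast.1 ((haw s).nearComb_of_dist_le hw hq hpq) }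
  exact happrox.isComputableClosed (computablePred_or (computablePred_nearFloor ha)
    (computablePred_or (computablePred_nearTooth ha) computablePred_nearSpine)) (isClosed_comb hw)

end ComputableNearComb

section Width

theorem tsum_le_sum_range_add_of_le_geometric {t : ℕ → ℝ} {c : ℝ} (ht : Summable t)
    (h : ∀ k, t k ≤ c * (1 / 2) ^ k) (s : ℕ) :
    ∑' k, t k ≤ ∑ k ∈ Finset.range s, t k + 2 * c * (1 / 2) ^ s := by
  have hterm (k : ℕ) : t (k + s) ≤ c * (1 / 2) ^ s * (1 / 2) ^ k :=
    (h (k + s)).trans_eq (by rw [pow_add]; ring)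
  have htail : ∑' k, t (k + s) ≤ c * (1 / 2) ^ s * 2 :=
    hasSum_le hterm ((summable_nat_add_iff s).2 ht).hasSum (hasSum_geometric_two.mul_left _)
  rw [← ht.sum_add_tsum_nat_add s]
  linarith

open Classical in
/-- The contribution of stage `k` to the half-width of the `n`-th tent, where `x = (n, k)`: it is
positive if and only if `q x`, and so small that the tents remain disjoint. -/
noncomputable def widthTerm (q : ℕ × ℕ → Prop) (x : ℕ × ℕ) : ℚ :=
  if q x then (1 / 2) ^ (x.1 + 3 + x.2) else 0

/-- The half-width of the `n`-th tent, accumulated over all stages. -/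
noncomputable def stagedWidth (q : ℕ × ℕ → Prop) (n : ℕ) : ℝ := ∑' k, (widthTerm q (n, k) : ℝ)

variable {q : ℕ × ℕ → Prop} {n : ℕ}

theorem computable_widthTerm (hq : ComputablePred q) : Computable (widthTerm q) := by
  classical
  exact (computable_ite hq (computable_half_pow (computable_nat_add (computable_nat_add
    Computable.fst (Computable.const 3)) Computable.snd)) (Computable.const 0)).of_eq
    fun _ => rfl

theorem widthTerm_nonneg (x : ℕ × ℕ) : (0 : ℝ) ≤ widthTerm q x := by
  unfold widthTerm
  split_ifs <;> positivity

theorem widthTerm_le_geometric (n k : ℕ) :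
    (widthTerm q (n, k) : ℝ) ≤ toothPos n / 8 * (1 / 2) ^ k := by
  have hpos : (0 : ℝ) ≤ toothPos n / 8 * (1 / 2) ^ k := by
    have := toothPos_pos n
    positivity
  unfold widthTerm
  split_ifs
  · refine le_of_eq ?_
    push_cast
    rw [toothPos, pow_add, pow_add]
    ring
  · exact_mod_cast hpos

theorem summable_widthTerm (n : ℕ) : Summable fun k => (widthTerm q (n, k) : ℝ) :=
  .of_nonneg_of_le (fun _ => widthTerm_nonneg _) (widthTerm_le_geometric n)
    (summable_geometric_two.mul_left _)

theorem stagedWidth_le_sum_add (n s : ℕ) :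
    stagedWidth q n ≤ ∑ k ∈ Finset.range s, (widthTerm q (n, k) : ℝ) +
      toothPos n / 4 * (1 / 2) ^ s :=
  (tsum_le_sum_range_add_of_le_geometric (summable_widthTerm n) (widthTerm_le_geometric n)
    s).trans_eq (by ring)

theorem stagedWidth_pos_iff : 0 < stagedWidth q n ↔ ∃ k, q (n, k) := by
  constructor
  · intro hpos
    by_contra! h
    exact hpos.ne' (by simp only [stagedWidth, widthTerm, h, if_false, Rat.cast_zero, tsum_zero])
  · rintro ⟨k, hk⟩
    have hterm : (0 : ℝ) < widthTerm q (n, k) := by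
      rw [widthTerm, if_pos hk]
      positivity
    exact (summable_widthTerm n).tsum_pos (fun _ => widthTerm_nonneg _) k hterm

theorem isTentWidth_stagedWidth (hinj : InjOn (fun n => n.unpair.1) {n | ∃ k, q (n, k)}) :
    IsTentWidth (stagedWidth q) where
  nonneg _ := tsum_nonneg fun _ => widthTerm_nonneg _
  le_quarter n := (stagedWidth_le_sum_add n 0).trans_eq (by simp)
  injOn := hinj.mono fun n hn =>
    stagedWidth_pos_iff.1 (lt_of_le_of_ne (tsum_nonneg fun _ => widthTerm_nonneg _) (Ne.symm hn))

theorem approximatesWidth_stagedWidth (s : ℕ) :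
    ApproximatesWidth (fun n => (∑ k ∈ Finset.range s, widthTerm q (n, k) : ℚ))
      (stagedWidth q) s where
  nonneg n := by
    push_cast
    exact Finset.sum_nonneg fun _ _ => widthTerm_nonneg _
  le n := by
    push_cast
    exact (summable_widthTerm n).sum_le_tsum _ fun _ _ => widthTerm_nonneg _
  le_add n := by
    push_cast
    refine (stagedWidth_le_sum_add n s).trans (add_le_add_right ?_ _)
    exact mul_le_of_le_one_left (by positivity) (by linarith [toothPos_le_one n])

theorem exists_tentWidth_of_rePred {A : ℕ → Prop} (hA : REPred A)
    (hinj : InjOn (fun n => n.unpair.1) {n | A n}) :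
    ∃ w, IsTentWidth w ∧ IsComputableClosed (comb w) ∧ ∀ n, A n → 0 < w n := by
  obtain ⟨q, hq, hAq⟩ := exists_stages_of_rePred hA
  have hw : IsTentWidth (stagedWidth q) :=
    isTentWidth_stagedWidth (hinj.mono fun n hn => (hAq n).2 hn)
  have hterm : Computable fun z : (ℕ × ℕ) × ℕ => widthTerm q (z.1.1, z.2) :=
    (computable_widthTerm hq).comp ((Computable.fst.comp Computable.fst).pair Computable.snd)
  exact ⟨stagedWidth q, hw, isComputableClosed_comb hw
    (computable_rat_sum_range hterm Computable.snd) approximatesWidth_stagedWidth,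
    fun n hn => stagedWidth_pos_iff.2 ((hAq n).1 hn)⟩

end Width

/-! ### Diagonalization against the `Π⁰₁` dendrites -/

/-- The rational open balls enumerated by the program `x.1` cover the tip of the tooth with
number `⟨x.1, x.2⟩`. -/
def CoversTip (x : ℕ × ℕ) : Prop :=
  ∃ c : (ℚ × ℚ) × ℚ, (∃ k, HaltsWithin x.1 c k) ∧ toothTip (Nat.pair x.1 x.2) ∈ ballOfCode c

theorem toothTip_pair (e m : ℕ) :
    toothTip (Nat.pair e m) = ratPoint ((1 / 2) ^ Nat.pair e m, (1 / 2) ^ e) := by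
  simp [toothTip, toothPos, toothHeight, ratPoint]

theorem rePred_coversTip : REPred CoversTip := by
  have hcovers (x : ℕ × ℕ) : CoversTip x ↔ ∃ b : ((ℚ × ℚ) × ℚ) × ℕ, HaltsWithin x.1 b.1 b.2 ∧
      dist (ratPoint ((1 / 2) ^ Nat.pair x.1 x.2, (1 / 2) ^ x.1)) (ratPoint b.1.1) + (0 : ℚ) <
        (b.1.2 : ℝ) := by
    simp only [CoversTip, ballOfCode, toothTip_pair, Prod.exists, mem_ofPred_eq, ratPoint,
      exists_and_right, Rat.cast_zero, add_zero]
  refine (rePred_exists (p := fun z : (ℕ × ℕ) × (((ℚ × ℚ) × ℚ) × ℕ) => HaltsWithin z.1.1 z.2.1 z.2.2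
    ∧ dist (ratPoint ((1 / 2) ^ Nat.pair z.1.1 z.1.2, (1 / 2) ^ z.1.1)) (ratPoint z.2.1.1)
      + (0 : ℚ) < (z.2.1.2 : ℝ)) (computablePred_and ?_ ?_)).of_eq fun x => (hcovers x).symm
  · exact computablePred_comp computablePred_haltsWithin
      (((Computable.fst.comp Computable.fst).pair (Computable.fst.comp Computable.snd)).pair
        (Computable.snd.comp Computable.snd))
  · have hcode : Computable fun z : (ℕ × ℕ) × (((ℚ × ℚ) × ℚ) × ℕ) => z.2.1 :=
      Computable.fst.comp Computable.snd
    exact computablePred_dist_ratPoint_add_lt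
      ((computable_half_pow (Primrec₂.natPair.to_comp.comp (Computable.fst.comp Computable.fst)
        (Computable.snd.comp Computable.fst))).pair
        (computable_half_pow (Computable.fst.comp Computable.fst)))
      (Computable.fst.comp hcode) (Computable.const 0) (Computable.snd.comp hcode)

theorem exists_rePred_diagonal : ∃ A : ℕ → Prop, REPred A ∧
    InjOn (fun n => n.unpair.1) {n | A n} ∧ ∀ R, IsPi01Closed R →
      (∃ n, A n ∧ toothTip n ∉ R) ∨ ∃ e, ∀ m, toothTip (Nat.pair e m) ∈ R := by
  obtain ⟨S, hS, hsub, huniq, hex⟩ := exists_rePred_uniformization rePred_coversTip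
  refine ⟨fun n => S n.unpair, rePred_comp hS Computable.unpair, ?_, ?_⟩
  · intro n (hn : S (n.unpair.1, n.unpair.2)) n' (hn' : S n'.unpair) (h : n.unpair.1 = n'.unpair.1)
    rw [h] at hn
    exact Nat.pairEquiv.symm.injective (Prod.ext h (huniq _ _ _ hn hn'))
  · rintro R ⟨W, hW, rfl⟩
    obtain ⟨e, he⟩ := exists_index_of_rePred hW
    have hcovers (m : ℕ) : CoversTip (e, m) ↔
        toothTip (Nat.pair e m) ∉ univ \ ⋃ c ∈ {c | W c}, ballOfCode c := by
      simp only [CoversTip, ← he, mem_sdiff, mem_univ, true_and, not_not, mem_iUnion, exists_prop,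
        mem_ofPred_eq]
    by_cases h : ∃ m, CoversTip (e, m)
    · obtain ⟨m, hm⟩ := h
      obtain ⟨m', hm'⟩ := hex _ hm
      refine Or.inl ⟨Nat.pair e m', ?_, (hcovers m').1 (hsub _ hm')⟩
      simpa only [Nat.unpair_pair] using hm'
    · exact Or.inr ⟨e, fun m => not_not.1 fun hm => h ⟨m, (hcovers m).2 hm⟩⟩

section Subcontinua

variable {w : ℕ → ℝ} {R : Set (ℝ × ℝ)}

theorem not_locallyConnectedSpace_of_toothTip_mem (hw : IsTentWidth w) (hR : R ⊆ comb w)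
    (hclosed : IsClosed R) {e : ℕ} (he : ∀ m, toothTip (Nat.pair e m) ∈ R) :
    ¬LocallyConnectedSpace R := by
  have hlim : Filter.Tendsto (fun m => toothTip (Nat.pair e m)) Filter.atTop
      (nhds (0, (1 / 2) ^ e)) := by
    have hpair : Filter.Tendsto (Nat.pair e) Filter.atTop Filter.atTop :=
      Filter.tendsto_atTop_mono (Nat.right_le_pair e) Filter.tendsto_id
    simpa only [toothTip, toothHeight, Nat.unpair_pair, Function.comp_def] using
      (tendsto_toothPos.comp hpair).prodMk_nhds tendsto_const_nhds
  refine not_locallyConnectedSpace_of_tendsto (continuous_ridge hw)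
    (dense_fiber_eq_mono hR dense_comb_fiber_eq_ridge) he
    (hclosed.mem_of_tendsto hlim (.of_forall he)) hlim (fun m => (toothPos_pos _).ne') ?_
  exact (ridge_eq_zero hw.le_abs_zero_sub).trans_lt (by positivity)

theorem ridge_mem_of_hausdorffDist_lt_one (hw : IsTentWidth w) (hR : R ⊆ comb w)
    (hcont : IsContinuum R) (hdist : hausdorffDist R (comb w) < 1) {x : ℝ} (hx : x ∈ Icc (-1) 1) :
    (x, ridge w x) ∈ R := by
  have hfin : hausdorffEDist R (comb w) ≠ ⊤ :=
    hausdorffEDist_ne_top_of_nonempty_of_bounded hcont.2.nonempty (hcont.2.nonempty.mono hR)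
      hcont.1.isBounded (isCompact_comb hw).isBounded
  have hnear {z : ℝ} (hz : z ∈ Icc (-2) 2) : ∃ p ∈ R, |p.1 - z| < 1 := by
    obtain ⟨p, hp, hpz⟩ := exists_dist_lt_of_hausdorffDist_lt' (ridge_mem_comb hz) hdist hfin
    exact ⟨p, hp, (le_max_left _ _).trans_lt hpz⟩
  obtain ⟨p, hp, hp'⟩ := hnear (z := -2) (by norm_num)
  obtain ⟨r, hr, hr'⟩ := hnear (z := 2) (by norm_num)
  have hpx : p.1 < -1 := by linarith [(abs_lt.1 hp').2]
  have hrx : 1 < r.1 := by linarith [(abs_lt.1 hr').1]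
  exact graph_mem_of_isPreconnected (continuous_ridge hw)
    (dense_fiber_eq_mono hR dense_comb_fiber_eq_ridge) hcont.1.isClosed hcont.2.isPreconnected
    hp hr (by linarith) ⟨hpx.le.trans hx.1, hx.2.trans hrx.le⟩

theorem toothTip_mem_of_hausdorffDist_lt_one (hw : IsTentWidth w) (hR : R ⊆ comb w)
    (hcont : IsContinuum R) (hdist : hausdorffDist R (comb w) < 1) {n : ℕ} (hn : 0 < w n) :
    toothTip n ∈ R := by
  have hx : toothPos n ∈ Icc (-1) 1 :=
    ⟨by linarith [toothPos_pos n], toothPos_le_one n⟩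
  have hmem := ridge_mem_of_hausdorffDist_lt_one hw hR hcont hdist hx
  rwa [ridge_toothPos hw hn] at hmem

end Subcontinua

theorem exists_computable_dendroid_not_star_including_pi01_dendrite :
    ∃ K : Set (ℝ × ℝ), IsComputableClosed K ∧ IsDendroid K ∧
      ∃ ε : ℝ, 0 < ε ∧ ∀ R : Set (ℝ × ℝ), R ⊆ K → IsPi01Closed R → IsDendrite R →
        ε ≤ Metric.hausdorffDist R K := by
  obtain ⟨A, hA, hinj, hdiag⟩ := exists_rePred_diagonal
  obtain ⟨w, hw, hcomputable, hpos⟩ := exists_tentWidth_of_rePred hA hinj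
  refine ⟨comb w, hcomputable, isDendroid_comb hw, 1, one_pos, fun R hR hPi ⟨hcont, hloc, _⟩ => ?_⟩
  by_contra! hdist
  rcases hdiag R hPi with ⟨n, hn, homitted⟩ | ⟨e, he⟩
  · exact homitted (toothTip_mem_of_hausdorffDist_lt_one hw hR hcont hdist (hpos n hn))
  · exact not_locallyConnectedSpace_of_toothTip_mem hw hR hcont.1.isClosed he hloc
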